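/- arXiv:1101.1488 — 2 statements merged into one kernel-verified Lean document; each statement's English description precedes it below -/
import Mathlib

section
/- There is an absolute constant C > 0 with the following property. Let P and Q be disjoint finite sets of points in the Euclidean plane ℝ² with |P| = |Q| = n, and suppose that every line in the plane contains at most r points of P ∪ Q. Then the number of bichromatic induced lines of (P, Q) is at least C · n · (2n − r). -/
open Set

noncomputable section

/-- The line through two points of the plane, as a set. -/
def lineThrough (p q : ℝ × ℝ) : Set (ℝ × ℝ) := (affineSpan ℝ {p, q} : AffineSubspace ℝ (ℝ × ℝ))

/-- A subset of the plane is a line if it is the affine span of two distinct points. -/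
def IsLine (L : Set (ℝ × ℝ)) : Prop := ∃ p q : ℝ × ℝ, p ≠ q ∧ L = lineThrough p q

/-- The richness of a line `L` with respect to a finite point set `S`:
the number of points of `S` incident on `L`. -/
def richness (S : Finset (ℝ × ℝ)) (L : Set (ℝ × ℝ)) : ℕ := ((S : Set (ℝ × ℝ)) ∩ L).ncard

/-- The lines induced by a finite point set `S`: lines passing through
at least two distinct points of `S`. -/
def InducedLines (S : Finset (ℝ × ℝ)) : Set (Set (ℝ × ℝ)) :=
  {L | IsLine L ∧ ∃ p ∈ S, ∃ q ∈ S, p ≠ q ∧ p ∈ L ∧ q ∈ L}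

/-- The bichromatic induced lines of a bichromatic point set `(P, Q)`:
lines incident on at least one point of `P` and at least one point of `Q`
(for disjoint `P`, `Q` such a line passes through two distinct points of `P ∪ Q`). -/
def BichromLines (P Q : Finset (ℝ × ℝ)) : Set (Set (ℝ × ℝ)) :=
  {L | IsLine L ∧ (∃ p ∈ P, p ∈ L) ∧ (∃ q ∈ Q, q ∈ L)}

/-!
If some line `L` carries a positive proportion of the points, say at least as many red as blue
ones, then joining the red points on `L` to some `k` blue points off `L` gives a fan of lines at
each of these blue points. The `i`-th fan has at most `i - 1` lines in common with the earlier
ones, so there are quadratically many lines as long as `k` is at most the number of red points on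
`L`.

Otherwise all lines are poor, and the Szemerédi–Trotter bound `O(N² / j³ + N / j)` on the number
of lines with more than `j` of the `N` points, summed over `j`, shows that lines of large constant
richness account for only a fraction of the `n²` red-blue pairs. The remaining pairs lie on lines
of bounded richness, so that there are at least a constant times `n²` of those.

The Szemerédi–Trotter bound is Székely's: after a generic shear, join consecutive points on each
line to obtain a straight-line graph with few crossings and apply the crossing lemma. The latter
follows by random sampling from a linear bound `#E ≤ 3 * #V` for crossing-free straight-line
graphs. Instead of Euler's formula, each edge with a successor in the rotation around its left
endpoint is charged to the leftmost vertex in the wedge between the two, and no vertex is charged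
more than twice.
-/

open scoped Finset

/-- A non-vertical segment of the plane `K × K`, given by its left and its right endpoint. -/
@[ext]
structure Segment (K : Type*) [LT K] where
  left : K × K
  right : K × K
  left_lt_right : left.1 < right.1

namespace Segment

variable {K : Type*} [LinearOrder K]

/-- The set of the two endpoints of a segment. -/
def endpoints (e : Segment K) : Finset (K × K) := {e.left, e.right}

/-- The open interval onto which the relative interior of a segment projects. -/
def openShadow (e : Segment K) : Set K := Ioo e.left.1 e.right.1

lemma left_right_injective :
    Function.Injective fun e : Segment K => (e.left, e.right) := fun _ _ h =>
  Segment.ext (congrArg Prod.fst h) (congrArg Prod.snd h)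

lemma left_mem_endpoints (e : Segment K) : e.left ∈ e.endpoints :=
  Finset.mem_insert_self _ _

lemma right_mem_endpoints (e : Segment K) : e.right ∈ e.endpoints :=
  Finset.mem_insert_of_mem (Finset.mem_singleton_self _)

lemma card_endpoints (e : Segment K) : #e.endpoints = 2 :=
  Finset.card_pair fun h => e.left_lt_right.ne (congrArg Prod.fst h)

lemma fst_notMem_openShadow {e : Segment K} {v : K × K} (hv : v ∈ e.endpoints) :
    v.1 ∉ e.openShadow := by
  rcases Finset.mem_insert.1 hv with rfl | hv
  · exact fun h => lt_irrefl _ h.1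
  · obtain rfl := Finset.mem_singleton.1 hv
    exact fun h => lt_irrefl _ h.2

variable [Field K]

/-- The slope of a segment; the denominator is positive. -/
def slope (e : Segment K) : K := (e.right.2 - e.left.2) / (e.right.1 - e.left.1)

/-- The ordinate at abscissa `x` of the line spanned by a segment. -/
def height (e : Segment K) (x : K) : K := e.left.2 + e.slope * (x - e.left.1)

/-- The line `y = m x + b` spanned by a segment, encoded as the pair `(m, b)`. -/
def line (e : Segment K) : K × K := (e.slope, e.height 0)

/-- The relative interiors of two segments cross, the first one having the larger slope. The slope
condition excludes overlapping collinear segments and makes a pair cross in one order only. -/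
def Crosses (e f : Segment K) : Prop :=
  f.slope < e.slope ∧ ∃ x ∈ e.openShadow ∩ f.openShadow, e.height x = f.height x

lemma height_left (e : Segment K) : e.height e.left.1 = e.left.2 := by
  simp [height]

lemma height_eq_add (e : Segment K) (x y : K) :
    e.height y = e.height x + e.slope * (y - x) := by
  unfold height
  ring

lemma height_eq_line (e : Segment K) (x : K) : e.height x = e.line.1 * x + e.line.2 := by
  rw [e.height_eq_add 0, line]
  ring

variable [IsStrictOrderedRing K]

lemma height_right (e : Segment K) : e.height e.right.1 = e.right.2 := by
  rw [height, slope, div_mul_cancel₀ _ (sub_pos.2 e.left_lt_right).ne', add_sub_cancel]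

lemma height_of_mem_endpoints {e : Segment K} {v : K × K} (hv : v ∈ e.endpoints) :
    e.height v.1 = v.2 := by
  rcases Finset.mem_insert.1 hv with rfl | hv
  · exact e.height_left
  · obtain rfl := Finset.mem_singleton.1 hv
    exact e.height_right

lemma height_lt_height_of_slope_lt {e f : Segment K} (hleft : f.left = e.left)
    (hslope : e.slope < f.slope) {x : K} (hx : e.left.1 < x) : e.height x < f.height x := by
  rw [height, height, hleft]
  gcongr

lemma height_le_height_of_slope_le {e f : Segment K} (hleft : f.left = e.left)
    (hslope : e.slope ≤ f.slope) {x : K} (hx : e.left.1 < x) : e.height x ≤ f.height x := by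
  rw [height, height, hleft]
  gcongr

lemma crosses_of_height_lt {e f : Segment K} {x y : K} (hxy : x < y)
    (hex : e.left.1 ≤ x) (hfx : f.left.1 ≤ x) (hey : y ≤ e.right.1) (hfy : y ≤ f.right.1)
    (hx : e.height x < f.height x) (hy : f.height y < e.height y) : e.Crosses f := by
  rw [e.height_eq_add x, f.height_eq_add x] at hy
  have hslope : f.slope < e.slope := by nlinarith
  set δ := (f.height x - e.height x) / (e.slope - f.slope) with hδ
  have hδ_mul : (e.slope - f.slope) * δ = f.height x - e.height x :=
    mul_div_cancel₀ _ (sub_pos.2 hslope).ne'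
  have hδ_pos : 0 < δ := div_pos (sub_pos.2 hx) (sub_pos.2 hslope)
  have hδ_lt : x + δ < y := by
    rw [← lt_sub_iff_add_lt', hδ, div_lt_iff₀' (sub_pos.2 hslope)]
    linarith
  refine ⟨hslope, x + δ, ⟨⟨?_, ?_⟩, ?_, ?_⟩, ?_⟩
  iterate 4 linarith only [hex, hfx, hey, hfy, hδ_pos, hδ_lt]
  rw [e.height_eq_add x, f.height_eq_add x]
  linear_combination hδ_mul

lemma eq_of_height_eq_of_slope_lt {e f : Segment K} (hslope : f.slope < e.slope) {x y : K}
    (hx : e.height x = f.height x) (hy : e.height y = f.height y) : x = y := by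
  rw [e.height_eq_add x, f.height_eq_add x, hx] at hy
  have : (e.slope - f.slope) * (y - x) = 0 := by linear_combination hy
  rcases mul_eq_zero.1 this with h | h <;> linarith

lemma Crosses.disjoint_endpoints {e f : Segment K} (h : e.Crosses f) :
    Disjoint e.endpoints f.endpoints := by
  obtain ⟨hslope, x, ⟨hxe, -⟩, hx⟩ := h
  refine Finset.disjoint_left.2 fun v hve hvf => fst_notMem_openShadow hve ?_
  have hv : e.height v.1 = f.height v.1 :=
    (height_of_mem_endpoints hve).trans (height_of_mem_endpoints hvf).symm
  rwa [← eq_of_height_eq_of_slope_lt hslope hx hv]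

end Segment

section Noncrossing

variable {K : Type*} [Field K] [LinearOrder K]

/-- A straight-line graph whose vertices have distinct abscissae and in which no edge passes through
a vertex other than its endpoints. Edges are allowed to cross. -/
structure IsGeometricGraph (V : Finset (K × K)) (E : Finset (Segment K)) : Prop where
  injOn_fst : InjOn Prod.fst (V : Set (K × K))
  endpoints_subset : ∀ e ∈ E, e.endpoints ⊆ V
  height_ne : ∀ e ∈ E, ∀ v ∈ V, v.1 ∈ e.openShadow → e.height v.1 ≠ v.2

namespace IsGeometricGraph

variable {V W : Finset (K × K)} {E F : Finset (Segment K)} {e f : Segment K}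

lemma left_mem (hG : IsGeometricGraph V E) (he : e ∈ E) : e.left ∈ V :=
  hG.endpoints_subset e he e.left_mem_endpoints

lemma right_mem (hG : IsGeometricGraph V E) (he : e ∈ E) : e.right ∈ V :=
  hG.endpoints_subset e he e.right_mem_endpoints

lemma mono (hG : IsGeometricGraph V E) (hW : W ⊆ V) (hF : F ⊆ E)
    (hFW : ∀ e ∈ F, e.endpoints ⊆ W) : IsGeometricGraph W F where
  injOn_fst := hG.injOn_fst.mono hW
  endpoints_subset := hFW
  height_ne e he v hv := hG.height_ne e (hF he) v (hW hv)

variable [IsStrictOrderedRing K]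

lemma eq_of_left_eq_of_slope_eq (hG : IsGeometricGraph V E) (he : e ∈ E) (hf : f ∈ E)
    (hleft : e.left = f.left) (hslope : e.slope = f.slope) : e = f := by
  have hheight (x : K) : e.height x = f.height x := by
    rw [Segment.height, Segment.height, hleft, hslope]
  refine Segment.ext hleft (hG.injOn_fst (hG.right_mem he) (hG.right_mem hf) ?_)
  by_contra hne
  rcases lt_or_gt_of_ne hne with hlt | hlt
  · exact hG.height_ne f hf _ (hG.right_mem he) ⟨hleft ▸ e.left_lt_right, hlt⟩
      (by rw [← hheight, e.height_right])
  · exact hG.height_ne e he _ (hG.right_mem hf) ⟨hleft ▸ f.left_lt_right, hlt⟩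
      (by rw [hheight, f.height_right])

end IsGeometricGraph

/-- The closed wedge between two segments `e` (below) and `f` (above) with a common left endpoint,
truncated at the abscissa where the shorter one ends and without its apex. -/
def wedge (e f : Segment K) : Set (K × K) :=
  {v | e.left.1 < v.1 ∧ v.1 ≤ e.right.1 ∧ v.1 ≤ f.right.1 ∧ e.height v.1 ≤ v.2 ∧ v.2 ≤ f.height v.1}

/-- The edge `f` follows the edge `e` in the counterclockwise order of the edges of `E` around their
common left endpoint, and `v` is the leftmost vertex of `V` in the wedge between them. -/
structure IsFirstInWedge (V : Finset (K × K)) (E : Finset (Segment K)) (e f : Segment K)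
    (v : K × K) : Prop where
  lower_mem : e ∈ E
  upper_mem : f ∈ E
  left_eq : f.left = e.left
  slope_lt : e.slope < f.slope
  slope_le : ∀ g ∈ E, g.left = e.left → e.slope < g.slope → f.slope ≤ g.slope
  vertex_mem : v ∈ V
  mem_wedge : v ∈ wedge e f
  fst_le : ∀ u ∈ V, u ∈ wedge e f → v.1 ≤ u.1

variable {V : Finset (K × K)} {E : Finset (Segment K)}

lemma IsFirstInWedge.snd_lt_height (hG : IsGeometricGraph V E) {e f : Segment K} {v : K × K}
    (h : IsFirstInWedge V E e f v) (hv : v ≠ f.right) : v.2 < f.height v.1 := by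
  obtain ⟨hlt, -, hle, -, hup⟩ := h.mem_wedge
  refine hup.lt_of_ne' (hG.height_ne f h.upper_mem v h.vertex_mem ⟨h.left_eq ▸ hlt, ?_⟩)
  exact hle.lt_of_ne fun heq =>
    hv (hG.injOn_fst h.vertex_mem (hG.right_mem h.upper_mem) heq)

variable [IsStrictOrderedRing K]

lemma IsGeometricGraph.exists_mem_wedge (hG : IsGeometricGraph V E) {e f : Segment K}
    (he : e ∈ E) (hf : f ∈ E) (hleft : f.left = e.left) (hslope : e.slope < f.slope) :
    ∃ v ∈ V, v ∈ wedge e f := by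
  have hf_lt : e.left.1 < f.right.1 := hleft ▸ f.left_lt_right
  rcases le_total e.right.1 f.right.1 with h | h
  · refine ⟨e.right, hG.right_mem he, e.left_lt_right, le_rfl, h, e.height_right.le, ?_⟩
    rw [← e.height_right]
    exact (Segment.height_lt_height_of_slope_lt hleft hslope e.left_lt_right).le
  · refine ⟨f.right, hG.right_mem hf, hf_lt, h, le_rfl, ?_, f.height_right.ge⟩
    rw [← f.height_right]
    exact (Segment.height_lt_height_of_slope_lt hleft hslope hf_lt).le

lemma IsGeometricGraph.exists_isFirstInWedge (hG : IsGeometricGraph V E) {e : Segment K}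
    (he : e ∈ E) (hnext : ∃ f ∈ E, f.left = e.left ∧ e.slope < f.slope) :
    ∃ f v, IsFirstInWedge V E e f v := by
  classical
  obtain ⟨f, hf, hf_min⟩ :=
    Finset.exists_min_image {f ∈ E | f.left = e.left ∧ e.slope < f.slope} Segment.slope
      (hnext.imp fun f => by simp)
  obtain ⟨hfE, hleft, hslope⟩ := Finset.mem_filter.1 hf
  obtain ⟨v, hv, hv_min⟩ := Finset.exists_min_image {v ∈ V | v ∈ wedge e f} Prod.fst
    ((hG.exists_mem_wedge he hfE hleft hslope).imp fun v => by simp)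
  obtain ⟨hvV, hvw⟩ := Finset.mem_filter.1 hv
  exact ⟨f, v, he, hfE, hleft, hslope,
    fun g hg hgl hgs => hf_min g (Finset.mem_filter.2 ⟨hg, hgl, hgs⟩), hvV, hvw,
    fun u hu huw => hv_min u (Finset.mem_filter.2 ⟨hu, huw⟩)⟩

namespace IsFirstInWedge

variable {e₁ f₁ e₂ f₂ : Segment K} {v : K × K}

lemma height_lower_lt_height_upper (hG : IsGeometricGraph V E)
    (h₁ : IsFirstInWedge V E e₁ f₁ v) (h₂ : IsFirstInWedge V E e₂ f₂ v)
    (htip : v = f₁.right ↔ v = f₂.right) : e₁.height v.1 < f₂.height v.1 := by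
  by_cases hv : v = f₁.right
  · calc e₁.height v.1 < f₁.height v.1 :=
          Segment.height_lt_height_of_slope_lt h₁.left_eq h₁.slope_lt h₁.mem_wedge.1
      _ = v.2 := by rw [hv, f₁.height_right]
      _ = f₂.height v.1 := by rw [htip.1 hv, f₂.height_right]
  · exact h₁.mem_wedge.2.2.2.1.trans_lt (h₂.snd_lt_height hG (mt htip.2 hv))

lemma left_fst_le (hG : IsGeometricGraph V E) (hcross : ∀ e ∈ E, ∀ f ∈ E, ¬ e.Crosses f)
    (h₁ : IsFirstInWedge V E e₁ f₁ v) (h₂ : IsFirstInWedge V E e₂ f₂ v)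
    (htip : v = f₁.right ↔ v = f₂.right) : e₂.left.1 ≤ e₁.left.1 := by
  obtain ⟨-, he₁, hf₁, -, -⟩ := h₁.mem_wedge
  obtain ⟨hv, he₂, hf₂, -, -⟩ := h₂.mem_wedge
  by_contra! hlt
  have hf₁_left : f₁.left.1 ≤ e₂.left.1 := h₁.left_eq ▸ hlt.le
  have hf₂_left : f₂.left.1 = e₂.left.1 := by rw [h₂.left_eq]
  -- The apex of the second wedge precedes `v`, so it lies outside the first wedge, and one of the
  -- two edges of the second wedge has to cross into the first wedge to reach `v`.
  have houtside : e₂.left.2 < e₁.height e₂.left.1 ∨ f₁.height e₂.left.1 < e₂.left.2 := by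
    by_contra! hin
    exact (h₁.fst_le e₂.left (hG.left_mem h₂.lower_mem)
      ⟨hlt, hv.le.trans he₁, hv.le.trans hf₁, hin.1, hin.2⟩).not_gt hv
  rcases houtside with hbelow | habove
  · refine hcross f₂ h₂.upper_mem e₁ h₁.lower_mem
      (Segment.crosses_of_height_lt hv hf₂_left.le hlt.le hf₂ he₁ ?_
        (h₁.height_lower_lt_height_upper hG h₂ htip))
    rwa [← hf₂_left, f₂.height_left, h₂.left_eq]
  · refine hcross f₁ h₁.upper_mem e₂ h₂.lower_mem
      (Segment.crosses_of_height_lt hv hf₁_left le_rfl hf₁ he₂ ?_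
        (h₂.height_lower_lt_height_upper hG h₁ htip.symm))
    rwa [e₂.height_left]

lemma lower_slope_le (hG : IsGeometricGraph V E)
    (h₁ : IsFirstInWedge V E e₁ f₁ v) (h₂ : IsFirstInWedge V E e₂ f₂ v)
    (htip : v = f₁.right ↔ v = f₂.right) (hleft : e₁.left = e₂.left) :
    e₂.slope ≤ e₁.slope := by
  by_contra! hlt
  have hf₁ : f₁.slope ≤ e₂.slope := h₁.slope_le e₂ h₂.lower_mem hleft.symm hlt
  have hle : f₁.height v.1 ≤ e₂.height v.1 :=
    Segment.height_le_height_of_slope_le (by rw [h₁.left_eq, hleft]) hf₁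
      (h₁.left_eq ▸ h₁.mem_wedge.1)
  exact (h₂.height_lower_lt_height_upper hG h₁ htip.symm).not_ge hle

lemma lower_eq (hG : IsGeometricGraph V E) (hcross : ∀ e ∈ E, ∀ f ∈ E, ¬ e.Crosses f)
    (h₁ : IsFirstInWedge V E e₁ f₁ v) (h₂ : IsFirstInWedge V E e₂ f₂ v)
    (htip : v = f₁.right ↔ v = f₂.right) : e₁ = e₂ := by
  have hleft : e₁.left = e₂.left :=
    hG.injOn_fst (hG.left_mem h₁.lower_mem) (hG.left_mem h₂.lower_mem)
      ((h₂.left_fst_le hG hcross h₁ htip.symm).antisymm (h₁.left_fst_le hG hcross h₂ htip))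
  exact hG.eq_of_left_eq_of_slope_eq h₁.lower_mem h₂.lower_mem hleft
    ((h₂.lower_slope_le hG h₁ htip.symm hleft.symm).antisymm
      (h₁.lower_slope_le hG h₂ htip hleft))

end IsFirstInWedge

namespace IsGeometricGraph

open Classical in
lemma card_topmost_le (hG : IsGeometricGraph V E) :
    #{e ∈ E | ¬ ∃ f ∈ E, f.left = e.left ∧ e.slope < f.slope} ≤ #V := by
  refine Finset.card_le_card_of_injOn Segment.left
    (fun e he => hG.left_mem (Finset.mem_filter.1 he).1) fun e he f hf hleft => ?_
  obtain ⟨heE, he_top⟩ := Finset.mem_filter.1 he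
  obtain ⟨hfE, hf_top⟩ := Finset.mem_filter.1 hf
  push Not at he_top hf_top
  exact hG.eq_of_left_eq_of_slope_eq heE hfE hleft
    ((hf_top e heE hleft).antisymm (he_top f hfE hleft.symm))

open Classical in
/-- An edge that is not topmost is determined by the first vertex of the wedge above it and by
whether this vertex is the tip of the upper edge of the wedge. -/
lemma card_not_topmost_le (hG : IsGeometricGraph V E)
    (hcross : ∀ e ∈ E, ∀ f ∈ E, ¬ e.Crosses f) :
    #{e ∈ E | ∃ f ∈ E, f.left = e.left ∧ e.slope < f.slope} ≤ 2 * #V := by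
  have hwedge (e : Segment K) (he : e ∈ {e ∈ E | ∃ f ∈ E, f.left = e.left ∧ e.slope < f.slope}) :
      ∃ f v, IsFirstInWedge V E e f v :=
    hG.exists_isFirstInWedge (Finset.mem_filter.1 he).1 (Finset.mem_filter.1 he).2
  choose! upper first hfirst using hwedge
  have hcard : #(V ×ˢ (Finset.univ : Finset Bool)) = 2 * #V := by
    rw [Finset.card_product, Finset.card_univ, Fintype.card_bool, mul_comm]
  rw [← hcard]
  refine Finset.card_le_card_of_injOn (fun e => (first e, decide (first e = (upper e).right)))
    (fun e he => Finset.mem_product.2 ⟨(hfirst e he).vertex_mem, Finset.mem_univ _⟩)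
    fun e he f hf hef => ?_
  obtain ⟨hv, htip⟩ := Prod.ext_iff.1 hef
  have hf' := hfirst f hf
  simp only [decide_eq_decide] at hv htip
  rw [← hv] at hf' htip
  exact (hfirst e he).lower_eq hG hcross hf' htip

theorem card_le_three_mul_card (hG : IsGeometricGraph V E)
    (hcross : ∀ e ∈ E, ∀ f ∈ E, ¬ e.Crosses f) : #E ≤ 3 * #V := by
  classical
  have hsplit := Finset.card_filter_add_card_filter_not (s := E)
    fun e => ∃ f ∈ E, f.left = e.left ∧ e.slope < f.slope
  have htop := hG.card_topmost_le
  have hrest := hG.card_not_topmost_le hcross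
  omega

end IsGeometricGraph

end Noncrossing

section RandomSubset

variable {α β R : Type*} [DecidableEq α] [CommRing R]

/-- The probability that a random subset of `V`, to which each element belongs independently with
probability `p`, is equal to `W`. -/
def subsetWeight (p : R) (V W : Finset α) : R := p ^ #W * (1 - p) ^ (#V - #W)

lemma sum_subsetWeight_of_subset (p : R) {T V : Finset α} (hT : T ⊆ V) :
    ∑ W ∈ V.powerset with T ⊆ W, subsetWeight p V W = p ^ #T := by
  have hsupersets : {W ∈ V.powerset | T ⊆ W} = (V \ T).powerset.image (T ∪ ·) := by
    rw [← Finset.Icc_eq_image_powerset hT]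
    ext W
    simp [and_comm]
  have hinj : InjOn (T ∪ ·) ((V \ T).powerset : Set (Finset α)) := by
    intro U hU U' hU' h
    have hdisj {X : Finset α} (hX : X ∈ (V \ T).powerset) : Disjoint X T :=
      Finset.disjoint_of_subset_left (Finset.mem_powerset.1 hX) Finset.sdiff_disjoint
    have h' : (T ∪ U) \ T = (T ∪ U') \ T := congrArg (· \ T) h
    rwa [Finset.union_sdiff_cancel_left (hdisj hU).symm,
      Finset.union_sdiff_cancel_left (hdisj hU').symm] at h'
  have hterm (U : Finset α) (hU : U ∈ (V \ T).powerset) :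
      subsetWeight p V (T ∪ U) = p ^ #T * (p ^ #U * (1 - p) ^ (#(V \ T) - #U)) := by
    have hdisj : Disjoint T U :=
      Finset.disjoint_of_subset_right (Finset.mem_powerset.1 hU) Finset.disjoint_sdiff
    rw [subsetWeight, Finset.card_union_of_disjoint hdisj, Finset.card_sdiff_of_subset hT,
      Nat.sub_sub, pow_add, mul_assoc]
  rw [hsupersets, Finset.sum_image hinj, Finset.sum_congr rfl hterm, ← Finset.mul_sum,
    Finset.sum_pow_mul_eq_add_pow, add_sub_cancel, one_pow, mul_one]

lemma sum_subsetWeight_mul_card (p : R) {V : Finset α} {s : Finset β} {T : β → Finset α} {c : ℕ}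
    (hT : ∀ b ∈ s, T b ⊆ V) (hc : ∀ b ∈ s, #(T b) = c) :
    ∑ W ∈ V.powerset, subsetWeight p V W * #{b ∈ s | T b ⊆ W} = #s * p ^ c := by
  calc ∑ W ∈ V.powerset, subsetWeight p V W * #{b ∈ s | T b ⊆ W}
      = ∑ W ∈ V.powerset, ∑ b ∈ s, if T b ⊆ W then subsetWeight p V W else 0 := by
        simp_rw [Finset.card_filter, Nat.cast_sum, Finset.mul_sum, Nat.cast_ite, Nat.cast_one,
          Nat.cast_zero, mul_ite, mul_one, mul_zero]
    _ = ∑ b ∈ s, ∑ W ∈ V.powerset with T b ⊆ W, subsetWeight p V W := by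
        rw [Finset.sum_comm]
        simp_rw [Finset.sum_filter]
    _ = ∑ _b ∈ s, p ^ c :=
        Finset.sum_congr rfl fun b hb => by rw [sum_subsetWeight_of_subset p (hT b hb), hc b hb]
    _ = #s * p ^ c := by rw [Finset.sum_const, nsmul_eq_mul]

end RandomSubset

section CrossingLemma

variable {K : Type*} [Field K] [LinearOrder K] {V : Finset (K × K)} {E : Finset (Segment K)}

open Classical in
/-- The crossing pairs of a set of segments, each listed once. -/
def crossings (E : Finset (Segment K)) : Finset (Segment K × Segment K) :=
  {c ∈ E ×ˢ E | c.1.Crosses c.2}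

lemma mem_crossings {c : Segment K × Segment K} :
    c ∈ crossings E ↔ (c.1 ∈ E ∧ c.2 ∈ E) ∧ c.1.Crosses c.2 := by
  simp only [crossings, Finset.mem_filter, Finset.mem_product]

variable [IsStrictOrderedRing K]

namespace IsGeometricGraph

lemma card_le_add_card_crossings (hG : IsGeometricGraph V E) :
    #E ≤ 3 * #V + #(crossings E) := by
  classical
  set F := E \ (crossings E).image Prod.fst
  have hF : F ⊆ E := Finset.sdiff_subset
  have hF_cross (e) (he : e ∈ F) (f) (hf : f ∈ F) : ¬ e.Crosses f := fun h =>
    (Finset.mem_sdiff.1 he).2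
      (Finset.mem_image.2 ⟨(e, f), mem_crossings.2 ⟨⟨hF he, hF hf⟩, h⟩, rfl⟩)
  have hF_card : #F ≤ 3 * #V :=
    (hG.mono subset_rfl hF fun e he => hG.endpoints_subset e (hF he)).card_le_three_mul_card
      hF_cross
  have hremoved : #E - #((crossings E).image Prod.fst) ≤ #F := Finset.le_card_sdiff _ _
  have himage : #((crossings E).image Prod.fst) ≤ #(crossings E) := Finset.card_image_le
  omega

open Classical in
lemma card_induced_le (hG : IsGeometricGraph V E) {W : Finset (K × K)} (hW : W ⊆ V) :
    #{e ∈ E | e.endpoints ⊆ W} ≤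
      3 * #W + #{c ∈ crossings E | c.1.endpoints ∪ c.2.endpoints ⊆ W} := by
  refine (hG.mono hW (Finset.filter_subset _ _)
    fun e he => (Finset.mem_filter.1 he).2).card_le_add_card_crossings.trans ?_
  gcongr
  intro c hc
  simp only [mem_crossings, Finset.mem_filter, Finset.union_subset_iff] at hc ⊢
  tauto

/-- The crossing lemma before optimizing in `p`: take expectations in `card_induced_le` for a random
set `W` to which each vertex belongs independently with probability `p`. -/
theorem card_mul_sq_le (hG : IsGeometricGraph V E) {p : K} (hp₀ : 0 ≤ p) (hp₁ : p ≤ 1) :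
    #E * p ^ 2 ≤ 3 * (#V * p) + #(crossings E) * p ^ 4 := by
  classical
  have hvertices : ∑ W ∈ V.powerset, subsetWeight p V W * #W = #V * p := by
    have h := sum_subsetWeight_mul_card p (s := V) (T := singleton) (c := 1)
      (fun v hv => Finset.singleton_subset_iff.2 hv) fun v _ => Finset.card_singleton v
    rw [pow_one] at h
    refine (Finset.sum_congr rfl fun W hW => ?_).trans h
    simp_rw [Finset.singleton_subset_iff, Finset.filter_mem_eq_inter,
      Finset.inter_eq_right.2 (Finset.mem_powerset.1 hW)]
  have hedges : ∑ W ∈ V.powerset, subsetWeight p V W * #{e ∈ E | e.endpoints ⊆ W} = #E * p ^ 2 :=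
    sum_subsetWeight_mul_card p hG.endpoints_subset fun e _ => e.card_endpoints
  have hcrossings : ∑ W ∈ V.powerset, subsetWeight p V W *
      #{c ∈ crossings E | c.1.endpoints ∪ c.2.endpoints ⊆ W} = #(crossings E) * p ^ 4 := by
    refine sum_subsetWeight_mul_card p (fun c hc => ?_) fun c hc => ?_
    · obtain ⟨⟨he, hf⟩, -⟩ := mem_crossings.1 hc
      exact Finset.union_subset (hG.endpoints_subset _ he) (hG.endpoints_subset _ hf)
    · rw [Finset.card_union_of_disjoint (mem_crossings.1 hc).2.disjoint_endpoints,
        Segment.card_endpoints, Segment.card_endpoints]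
  have hweight (W : Finset (K × K)) : 0 ≤ subsetWeight p V W :=
    mul_nonneg (pow_nonneg hp₀ _) (pow_nonneg (sub_nonneg.2 hp₁) _)
  rw [← hvertices, ← hedges, ← hcrossings, Finset.mul_sum, ← Finset.sum_add_distrib]
  refine Finset.sum_le_sum fun W hW => ?_
  have hinduced : (#{e ∈ E | e.endpoints ⊆ W} : K) ≤
      3 * #W + #{c ∈ crossings E | c.1.endpoints ∪ c.2.endpoints ⊆ W} := by
    exact_mod_cast hG.card_induced_le (Finset.mem_powerset.1 hW)
  linarith [mul_le_mul_of_nonneg_left hinduced (hweight W)]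

end IsGeometricGraph

end CrossingLemma

section SzemerediTrotter

/-- Incidence of the point `v` with the non-vertical line `y = m x + b`, encoded as `l = (m, b)`. -/
def LiesOn {R : Type*} [Semiring R] (v l : R × R) : Prop := v.2 = l.1 * v.1 + l.2

variable {K : Type*} [Field K] [LinearOrder K] {V M : Finset (K × K)}

open Classical in
/-- The segments spanned by two points of `V` that are consecutive points of `V` on a common line of
`M`: the edges of Székely's incidence graph. -/
def consecutiveSegments (V M : Finset (K × K)) : Finset (Segment K) :=
  {e ∈ (V ×ˢ V).preimage (fun e => (e.left, e.right)) Segment.left_right_injective.injOn |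
    e.line ∈ M ∧ ∀ v ∈ V, v.1 ∈ e.openShadow → e.height v.1 ≠ v.2}

lemma mem_consecutiveSegments {e : Segment K} :
    e ∈ consecutiveSegments V M ↔ (e.left ∈ V ∧ e.right ∈ V) ∧
      e.line ∈ M ∧ ∀ v ∈ V, v.1 ∈ e.openShadow → e.height v.1 ≠ v.2 := by
  simp only [consecutiveSegments, Finset.mem_filter, Finset.mem_preimage, Finset.mem_product]

lemma isGeometricGraph_consecutiveSegments (hV : InjOn Prod.fst (V : Set (K × K))) :
    IsGeometricGraph V (consecutiveSegments V M) where
  injOn_fst := hV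
  endpoints_subset e he := by
    obtain ⟨⟨hleft, hright⟩, -⟩ := mem_consecutiveSegments.1 he
    exact Finset.insert_subset hleft (Finset.singleton_subset_iff.2 hright)
  height_ne e he := (mem_consecutiveSegments.1 he).2.2

namespace IsGeometricGraph

variable {E : Finset (Segment K)} {e f : Segment K} {x : K}

lemma left_fst_le_of_line_eq (hG : IsGeometricGraph V E) (he : e ∈ E) (hf : f ∈ E)
    (hline : e.line = f.line) (hxe : x ∈ e.openShadow) (hxf : x ∈ f.openShadow) :
    f.left.1 ≤ e.left.1 := by
  by_contra! hlt
  refine hG.height_ne e he f.left (hG.left_mem hf) ⟨hlt, hxf.1.trans hxe.2⟩ ?_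
  rw [e.height_eq_line, hline, ← f.height_eq_line, f.height_left]

variable [IsStrictOrderedRing K]

lemma right_fst_le_of_line_eq (hG : IsGeometricGraph V E) (he : e ∈ E) (hf : f ∈ E)
    (hline : e.line = f.line) (hxe : x ∈ e.openShadow) (hxf : x ∈ f.openShadow) :
    e.right.1 ≤ f.right.1 := by
  by_contra! hlt
  refine hG.height_ne e he f.right (hG.right_mem hf) ⟨hxe.1.trans hxf.2, hlt⟩ ?_
  rw [e.height_eq_line, hline, ← f.height_eq_line, f.height_right]

lemma eq_of_line_eq (hG : IsGeometricGraph V E) (he : e ∈ E) (hf : f ∈ E)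
    (hline : e.line = f.line) (hxe : x ∈ e.openShadow) (hxf : x ∈ f.openShadow) : e = f :=
  Segment.ext
    (hG.injOn_fst (hG.left_mem he) (hG.left_mem hf)
      ((hG.left_fst_le_of_line_eq hf he hline.symm hxf hxe).antisymm
        (hG.left_fst_le_of_line_eq he hf hline hxe hxf)))
    (hG.injOn_fst (hG.right_mem he) (hG.right_mem hf)
      ((hG.right_fst_le_of_line_eq he hf hline hxe hxf).antisymm
        (hG.right_fst_le_of_line_eq hf he hline.symm hxf hxe)))

/-- Two lines meet at most once, and at most one edge on each of them contains the meeting point. -/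
lemma card_crossings_le_sq (hG : IsGeometricGraph V E) (hM : ∀ e ∈ E, e.line ∈ M) :
    #(crossings E) ≤ #M ^ 2 := by
  rw [pow_two, ← Finset.card_product]
  refine Finset.card_le_card_of_injOn (fun c => (c.1.line, c.2.line)) (fun c hc => ?_) ?_
  · obtain ⟨⟨he, hf⟩, -⟩ := mem_crossings.1 hc
    exact Finset.mem_product.2 ⟨hM _ he, hM _ hf⟩
  · rintro ⟨e, f⟩ hc ⟨e', f'⟩ hc' hlines
    obtain ⟨⟨he, hf⟩, hslope, x, ⟨hxe, hxf⟩, hx⟩ := mem_crossings.1 hc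
    obtain ⟨⟨he', hf'⟩, -, x', ⟨hxe', hxf'⟩, hx'⟩ := mem_crossings.1 hc'
    obtain ⟨hline_e, hline_f⟩ := Prod.ext_iff.1 hlines
    simp only at hline_e hline_f hx hx' hslope
    rw [e'.height_eq_line, f'.height_eq_line, ← hline_e, ← hline_f, ← e.height_eq_line,
      ← f.height_eq_line] at hx'
    obtain rfl := Segment.eq_of_height_eq_of_slope_lt hslope hx hx'
    exact Prod.ext (hG.eq_of_line_eq he he' hline_e hxe hxe')
      (hG.eq_of_line_eq hf hf' hline_f hxf hxf')

end IsGeometricGraph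

variable [IsStrictOrderedRing K]

lemma Segment.line_eq_of_liesOn {e : Segment K} {l : K × K} (hleft : LiesOn e.left l)
    (hright : LiesOn e.right l) : e.line = l := by
  unfold LiesOn at hleft hright
  have hslope : e.slope = l.1 := by
    rw [Segment.slope, div_eq_iff (sub_pos.2 e.left_lt_right).ne', hleft, hright]
    ring
  refine Prod.ext hslope ?_
  rw [Segment.line, Segment.height, hslope, hleft]
  ring

lemma exists_consecutiveSegment {l u w : K × K} (hl : l ∈ M) (hu : u ∈ V) (hul : LiesOn u l)
    (hw : w ∈ V) (hwl : LiesOn w l) (huw : u.1 < w.1) :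
    ∃ e ∈ consecutiveSegments V M, e.line = l ∧ e.left = u := by
  classical
  obtain ⟨v, hv, hv_min⟩ := Finset.exists_min_image {v ∈ V | LiesOn v l ∧ u.1 < v.1} Prod.fst
    ⟨w, Finset.mem_filter.2 ⟨hw, hwl, huw⟩⟩
  obtain ⟨hvV, hvl, huv⟩ := Finset.mem_filter.1 hv
  let e : Segment K := ⟨u, v, huv⟩
  have hline : e.line = l := Segment.line_eq_of_liesOn hul hvl
  refine ⟨e, mem_consecutiveSegments.2 ⟨⟨hu, hvV⟩, hline ▸ hl, fun z hz hzx hzh => ?_⟩, hline, rfl⟩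
  have hzl : LiesOn z l := by rw [LiesOn, ← hzh, e.height_eq_line, hline]
  exact (hv_min z (Finset.mem_filter.2 ⟨hz, hzl, hzx.1⟩)).not_gt hzx.2

open Classical in
lemma mul_card_le_card_consecutiveSegments (hV : InjOn Prod.fst (V : Set (K × K))) {j : ℕ}
    (hM : ∀ l ∈ M, j + 1 ≤ #{v ∈ V | LiesOn v l}) : j * #M ≤ #(consecutiveSegments V M) := by
  refine Finset.mul_card_image_le_card_of_maps_to (f := Segment.line)
    (fun e he => (mem_consecutiveSegments.1 he).2.1) j fun l hl => ?_
  set W := {v ∈ V | LiesOn v l}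
  obtain ⟨w, hw, hw_max⟩ := W.exists_max_image Prod.fst
    (Finset.card_pos.1 (Nat.succ_pos j |>.trans_le (hM l hl)))
  have hleft : W.erase w ⊆ {e ∈ consecutiveSegments V M | e.line = l}.image Segment.left := by
    intro u hu
    obtain ⟨hne, huW⟩ := Finset.mem_erase.1 hu
    obtain ⟨huV, hul⟩ := Finset.mem_filter.1 huW
    obtain ⟨hwV, hwl⟩ := Finset.mem_filter.1 hw
    have huw : u.1 < w.1 := (hw_max u huW).lt_of_ne fun h => hne (hV huV hwV h)
    obtain ⟨e, he, hline, rfl⟩ := exists_consecutiveSegment hl huV hul hwV hwl huw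
    exact Finset.mem_image_of_mem _ (Finset.mem_filter.2 ⟨he, hline⟩)
  calc j ≤ #(W.erase w) := by
        rw [Finset.card_erase_of_mem hw]
        exact Nat.le_sub_one_of_lt (hM l hl)
    _ ≤ _ := (Finset.card_le_card hleft).trans Finset.card_image_le

open Classical in
theorem mul_card_mul_sq_le_of_rich (hV : InjOn Prod.fst (V : Set (K × K))) {j : ℕ}
    (hM : ∀ l ∈ M, j + 1 ≤ #{v ∈ V | LiesOn v l}) {p : K} (hp₀ : 0 ≤ p) (hp₁ : p ≤ 1) :
    j * #M * p ^ 2 ≤ 3 * (#V * p) + #M ^ 2 * p ^ 4 := by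
  have hG : IsGeometricGraph V (consecutiveSegments V M) := isGeometricGraph_consecutiveSegments hV
  have hedges : (j * #M : K) ≤ #(consecutiveSegments V M) := by
    exact_mod_cast mul_card_le_card_consecutiveSegments hV hM
  have hcrossings : (#(crossings (consecutiveSegments V M)) : K) ≤ #M ^ 2 := by
    exact_mod_cast hG.card_crossings_le_sq fun e he => (mem_consecutiveSegments.1 he).2.1
  calc (j * #M * p ^ 2 : K) ≤ #(consecutiveSegments V M) * p ^ 2 := by gcongr
    _ ≤ 3 * (#V * p) + #(crossings (consecutiveSegments V M)) * p ^ 4 := hG.card_mul_sq_le hp₀ hp₁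
    _ ≤ 3 * (#V * p) + #M ^ 2 * p ^ 4 := by gcongr

/-- The optimal choices are `p = 1` if `2 m < j` and `p = √(j / (2 m))` otherwise. -/
lemma le_of_forall_mul_sq_le {m j N : ℝ} (hm : 0 ≤ m) (hj : 0 < j) (hN : 0 ≤ N)
    (h : ∀ p : ℝ, 0 ≤ p → p ≤ 1 → j * m * p ^ 2 ≤ 3 * (N * p) + m ^ 2 * p ^ 4) :
    m ≤ 72 * N ^ 2 / j ^ 3 + 6 * N / j := by
  rcases lt_or_ge (2 * m) j with hmj | hmj
  · have hm_le : m ≤ 6 * N / j := by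
      rw [le_div_iff₀ hj]
      nlinarith [h 1 zero_le_one le_rfl]
    exact hm_le.trans (le_add_of_nonneg_left (by positivity))
  · have hm_pos : 0 < m := by linarith
    set p := √(j / (2 * m)) with hp
    have hp_pos : 0 < p := Real.sqrt_pos.2 (by positivity)
    have hp_le : p ≤ 1 := Real.sqrt_le_one.2 ((div_le_one (by positivity)).2 hmj)
    have hp_sq : 2 * m * p ^ 2 = j := by
      rw [hp, Real.sq_sqrt (by positivity)]
      field_simp
    have hjmp : j * m * p ≤ 6 * N := by
      refine le_of_mul_le_mul_right ?_ hp_pos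
      linear_combination 2 * h p hp_pos.le hp_le + m * p ^ 2 * hp_sq
    have hcube : m * j ^ 3 ≤ 72 * N ^ 2 := by
      calc m * j ^ 3 = 2 * (j * m * p) ^ 2 := by
            linear_combination -(m * j ^ 2) * hp_sq
        _ ≤ 2 * (6 * N) ^ 2 := by gcongr
        _ = 72 * N ^ 2 := by ring
    exact ((le_div_iff₀ (by positivity)).2 hcube).trans (le_add_of_nonneg_right (by positivity))

end SzemerediTrotter

section Lines

variable {L : Set (ℝ × ℝ)} {p q : ℝ × ℝ}

lemma left_mem_lineThrough (p q : ℝ × ℝ) : p ∈ lineThrough p q := left_mem_affineSpan_pair ℝ p q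

lemma right_mem_lineThrough (p q : ℝ × ℝ) : q ∈ lineThrough p q := right_mem_affineSpan_pair ℝ p q

lemma isLine_lineThrough (hpq : p ≠ q) : IsLine (lineThrough p q) := ⟨p, q, hpq, rfl⟩

lemma IsLine.eq_lineThrough (hL : IsLine L) (hpq : p ≠ q) (hp : p ∈ L) (hq : q ∈ L) :
    L = lineThrough p q := by
  obtain ⟨a, b, -, rfl⟩ := hL
  exact congrArg _ (affineSpan_pair_eq_of_mem_of_mem_of_ne hp hq hpq).symm

lemma mem_lineThrough_iff (hpq : p ≠ q) {x : ℝ × ℝ} :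
    x ∈ lineThrough p q ↔ (q.1 - p.1) * (x.2 - p.2) = (q.2 - p.2) * (x.1 - p.1) := by
  rw [lineThrough, SetLike.mem_coe, mem_affineSpan_pair_iff_exists_lineMap_eq]
  simp only [Prod.ext_iff, AffineMap.lineMap_apply, vsub_eq_sub, vadd_eq_add, Prod.fst_add,
    Prod.snd_add, Prod.smul_fst, Prod.smul_snd, Prod.fst_sub, Prod.snd_sub, smul_eq_mul]
  constructor
  · rintro ⟨r, h₁, h₂⟩
    linear_combination (q.2 - p.2) * h₁ - (q.1 - p.1) * h₂
  · intro hx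
    by_cases hfst : q.1 - p.1 = 0
    · have hsnd : q.2 - p.2 ≠ 0 := fun hsnd =>
        hpq (Prod.ext (sub_eq_zero.1 hfst).symm (sub_eq_zero.1 hsnd).symm)
      have hxp : x.1 - p.1 = 0 := by simpa [hfst, hsnd] using hx.symm
      refine ⟨(x.2 - p.2) / (q.2 - p.2), ?_, by rw [div_mul_cancel₀ _ hsnd, sub_add_cancel]⟩
      rw [hfst, mul_zero, zero_add, sub_eq_zero.1 hxp]
    · refine ⟨(x.1 - p.1) / (q.1 - p.1), by rw [div_mul_cancel₀ _ hfst, sub_add_cancel], ?_⟩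
      field_simp
      linear_combination -hx

open Classical in
lemma richness_eq_card_filter (S : Finset (ℝ × ℝ)) (L : Set (ℝ × ℝ)) :
    richness S L = #{x ∈ S | x ∈ L} := by
  rw [← ncard_coe_finset, Finset.coe_filter]
  rfl

lemma richness_union {P Q : Finset (ℝ × ℝ)} (hPQ : Disjoint P Q) (L : Set (ℝ × ℝ)) :
    richness (P ∪ Q) L = richness P L + richness Q L := by
  classical
  simp only [richness_eq_card_filter, Finset.filter_union]
  exact Finset.card_union_of_disjoint (Finset.disjoint_filter_filter hPQ)

lemma richness_le_card (S : Finset (ℝ × ℝ)) (L : Set (ℝ × ℝ)) : richness S L ≤ #S := by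
  classical
  exact (richness_eq_card_filter S L).trans_le (Finset.card_filter_le S _)

end Lines

section RichLines

variable {L : Set (ℝ × ℝ)} {S : Finset (ℝ × ℝ)}

/-- The horizontal shear of the plane with factor `t`. A generic shear of a finite set puts its
points on distinct vertical lines, as Székely's argument requires. -/
def shear (t : ℝ) (p : ℝ × ℝ) : ℝ × ℝ := (p.1 + t * p.2, p.2)

lemma shear_injective (t : ℝ) : Function.Injective (shear t) := by
  intro p q h
  obtain ⟨h₁, h₂⟩ := Prod.ext_iff.1 h
  simp only [shear] at h₁ h₂
  exact Prod.ext (by linear_combination h₁ - t * h₂) h₂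

lemma exists_injOn_shear_fst (S : Finset (ℝ × ℝ)) :
    ∃ t, InjOn (fun p => (shear t p).1) (S : Set (ℝ × ℝ)) := by
  classical
  obtain ⟨t, ht⟩ := Infinite.exists_notMem_finset
    ((S ×ˢ S).image fun e => (e.2.1 - e.1.1) / (e.1.2 - e.2.2))
  refine ⟨t, fun p hp q hq (h : p.1 + t * p.2 = q.1 + t * q.2) => ?_⟩
  by_cases hsnd : p.2 = q.2
  · exact Prod.ext (by rwa [hsnd, add_left_inj] at h) hsnd
  · refine absurd (Finset.mem_image.2 ⟨(p, q), Finset.mk_mem_product hp hq, ?_⟩) ht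
    rw [div_eq_iff (sub_ne_zero.2 hsnd)]
    linear_combination -h

lemma exists_mem_iff_liesOn_shear {t : ℝ} (hS : InjOn (fun p => (shear t p).1) (S : Set (ℝ × ℝ)))
    (hL : IsLine L) (hrich : 1 < richness S L) : ∃ l, ∀ x, x ∈ L ↔ LiesOn (shear t x) l := by
  classical
  rw [richness_eq_card_filter, Finset.one_lt_card] at hrich
  obtain ⟨p, hp, q, hq, hpq⟩ := hrich
  rw [Finset.mem_filter] at hp hq
  have hrun : (q.1 - p.1) + t * (q.2 - p.2) ≠ 0 := fun h =>
    hpq (hS hp.1 hq.1 (by simp only [shear]; linear_combination -h))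
  obtain ⟨m, hm⟩ : ∃ m, m * ((q.1 - p.1) + t * (q.2 - p.2)) = q.2 - p.2 :=
    ⟨_, div_mul_cancel₀ _ hrun⟩
  refine ⟨(m, p.2 - m * (p.1 + t * p.2)), fun x => ?_⟩
  rw [hL.eq_lineThrough hpq hp.2 hq.2, mem_lineThrough_iff hpq, LiesOn, shear]
  constructor
  · intro h
    apply mul_left_cancel₀ hrun
    linear_combination h - (x.1 + t * x.2 - p.1 - t * p.2) * hm
  · intro h
    linear_combination ((q.1 - p.1) + t * (q.2 - p.2)) * h +
      (x.1 + t * x.2 - p.1 - t * p.2) * hm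

open Classical in
lemma exists_injOn_image_shear {M : Finset (Set (ℝ × ℝ))} {t : ℝ}
    (hS : InjOn (fun p => (shear t p).1) (S : Set (ℝ × ℝ))) (hM : ∀ L ∈ M, IsLine L)
    (hrich : ∀ L ∈ M, 1 < richness S L) :
    ∃ l : Set (ℝ × ℝ) → ℝ × ℝ, InjOn l M ∧
      ∀ L ∈ M, richness S L ≤ #{v ∈ S.image (shear t) | LiesOn v (l L)} := by
  have hline : ∀ L, L ∈ M → ∃ l, ∀ x, x ∈ L ↔ LiesOn (shear t x) l := fun L hL =>
    exists_mem_iff_liesOn_shear hS (hM L hL) (hrich L hL)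
  choose! l hl using hline
  refine ⟨l, fun L hL L' hL' h => ?_, fun L hL => ?_⟩
  · ext x
    rw [hl L hL, hl L' hL', h]
  · rw [richness_eq_card_filter, Finset.filter_image,
      Finset.card_image_of_injective _ (shear_injective t)]
    simp only [hl L hL, le_refl]

theorem card_le_of_rich {M : Finset (Set (ℝ × ℝ))} {j : ℕ} (hj : 1 ≤ j) (hM : ∀ L ∈ M, IsLine L)
    (hrich : ∀ L ∈ M, j < richness S L) :
    (#M : ℝ) ≤ 72 * #S ^ 2 / j ^ 3 + 6 * #S / j := by
  classical
  obtain ⟨t, ht⟩ := exists_injOn_shear_fst S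
  obtain ⟨l, hl, hlM⟩ := exists_injOn_image_shear ht hM fun L hL => hj.trans_lt (hrich L hL)
  refine le_of_forall_mul_sq_le (by positivity) (by exact_mod_cast hj) (by positivity)
    fun p hp₀ hp₁ => ?_
  rw [← Finset.card_image_of_injOn hl, ← Finset.card_image_of_injective S (shear_injective t)]
  refine mul_card_mul_sq_le_of_rich ?_ (Finset.forall_mem_image.2 fun L hL =>
    (hrich L hL).trans_le (hlM L hL)) hp₀ hp₁
  rw [Finset.coe_image]
  exact ht.image_of_comp

end RichLines

section PairCounting

lemma sq_le_add_sum_Ico {κ R : ℕ} (hR : κ < R) :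
    R ^ 2 ≤ (κ + 1) ^ 2 + ∑ j ∈ Finset.Ico (κ + 1) R, 2 * (j + 1) := by
  induction R, hR using Nat.le_induction with
  | base => simp
  | succ m hm ih =>
    rw [Finset.sum_Ico_succ_top hm]
    linarith

lemma sum_sq_le_sum_card_lt {ι : Type*} (B : Finset ι) {f : ι → ℕ} {D : ℕ}
    (hD : ∀ i ∈ B, f i ≤ D) (κ : ℕ) :
    ∑ i ∈ B, f i ^ 2 ≤
      #B * (κ + 1) ^ 2 + ∑ j ∈ Finset.Ioo κ D, #{i ∈ B | j < f i} * (2 * (j + 1)) := by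
  have hlayers : ∀ i ∈ B,
      f i ^ 2 ≤ (κ + 1) ^ 2 + ∑ j ∈ Finset.Ioo κ D with j < f i, 2 * (j + 1) := by
    intro i hi
    rcases le_or_gt (f i) κ with h | h
    · exact (Nat.pow_le_pow_left (h.trans κ.le_succ) 2).trans le_self_add
    · refine (sq_le_add_sum_Ico h).trans (add_le_add_right (Finset.sum_le_sum_of_subset ?_) _)
      intro j hj
      have := hD i hi
      simp only [Finset.mem_Ico, Finset.mem_filter, Finset.mem_Ioo] at hj ⊢
      omega
  calc ∑ i ∈ B, f i ^ 2
      ≤ ∑ i ∈ B, ((κ + 1) ^ 2 + ∑ j ∈ Finset.Ioo κ D with j < f i, 2 * (j + 1)) :=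
        Finset.sum_le_sum hlayers
    _ = _ := by
        simp only [Finset.sum_filter, Finset.sum_add_distrib, Finset.sum_const, smul_eq_mul]
        rw [Finset.sum_comm]
        simp only [← Finset.sum_filter, Finset.sum_const, smul_eq_mul]

lemma card_filter_richness_mul_le {S : Finset (ℝ × ℝ)} {B : Finset (Set (ℝ × ℝ))} {j : ℕ}
    (hB : ∀ L ∈ B, IsLine L) (hj : 1 ≤ j) :
    (#{L ∈ B | j < richness S L} * (2 * (j + 1)) : ℝ) ≤
      288 * #S ^ 2 * ((j : ℝ) ^ 2)⁻¹ + 24 * #S := by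
  have hj' : (1 : ℝ) ≤ j := by exact_mod_cast hj
  have hcard := card_le_of_rich (S := S) (M := {L ∈ B | j < richness S L}) hj
    (fun L hL => hB L (Finset.mem_filter.1 hL).1) (fun L hL => (Finset.mem_filter.1 hL).2)
  calc (#{L ∈ B | j < richness S L} * (2 * (j + 1)) : ℝ)
      ≤ (72 * #S ^ 2 / j ^ 3 + 6 * #S / j) * (4 * j) :=
        mul_le_mul hcard (by linarith) (by positivity) (by positivity)
    _ = 288 * #S ^ 2 * ((j : ℝ) ^ 2)⁻¹ + 24 * #S := by
        field_simp
        ring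

theorem sum_sq_richness_le {S : Finset (ℝ × ℝ)} {B : Finset (Set (ℝ × ℝ))} {D : ℕ}
    (hB : ∀ L ∈ B, IsLine L) (hD : ∀ L ∈ B, richness S L ≤ D) (κ : ℕ) :
    ∑ L ∈ B, (richness S L : ℝ) ^ 2 ≤
      #B * (κ + 1) ^ 2 + 576 * #S ^ 2 / (κ + 1) + 24 * #S * D := by
  have hcard_Ioo : (#(Finset.Ioo κ D) : ℝ) ≤ D := by
    rw [Nat.card_Ioo]
    exact_mod_cast (Nat.sub_le _ 1).trans (Nat.sub_le D κ)
  calc ∑ L ∈ B, (richness S L : ℝ) ^ 2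
      ≤ #B * (κ + 1) ^ 2 +
          ∑ j ∈ Finset.Ioo κ D, (#{L ∈ B | j < richness S L} * (2 * (j + 1)) : ℝ) := by
        exact_mod_cast sum_sq_le_sum_card_lt B hD κ
    _ ≤ #B * (κ + 1) ^ 2 +
          ∑ j ∈ Finset.Ioo κ D, (288 * #S ^ 2 * ((j : ℝ) ^ 2)⁻¹ + 24 * #S) :=
        add_le_add_right (Finset.sum_le_sum fun j hj =>
          card_filter_richness_mul_le hB (Nat.one_le_of_lt (Finset.mem_Ioo.1 hj).1)) _
    _ = #B * (κ + 1) ^ 2 + 288 * #S ^ 2 * ∑ j ∈ Finset.Ioo κ D, ((j : ℝ) ^ 2)⁻¹ +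
          24 * #S * #(Finset.Ioo κ D) := by
        rw [Finset.sum_add_distrib, ← Finset.mul_sum, Finset.sum_const, nsmul_eq_mul]
        ring
    _ ≤ #B * (κ + 1) ^ 2 + 288 * #S ^ 2 * (2 / (κ + 1)) + 24 * #S * D := by
        gcongr
        exact sum_Ioo_inv_sq_le κ D
    _ = #B * (κ + 1) ^ 2 + 576 * #S ^ 2 / (κ + 1) + 24 * #S * D := by ring

open Classical in
lemma card_mul_card_le_sum_sq_richness (P Q : Finset (ℝ × ℝ)) :
    #P * #Q ≤ ∑ L ∈ Finset.image₂ lineThrough P Q, richness (P ∪ Q) L ^ 2 := by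
  rw [← Finset.card_product, ← Finset.image_uncurry_product,
    Finset.card_eq_sum_card_image (Function.uncurry lineThrough)]
  refine Finset.sum_le_sum fun L _ => ?_
  rw [richness_eq_card_filter, pow_two, ← Finset.card_product]
  refine Finset.card_le_card ?_
  rintro ⟨p, q⟩ hpq
  obtain ⟨hmem, rfl⟩ := Finset.mem_filter.1 hpq
  obtain ⟨hp, hq⟩ := Finset.mem_product.1 hmem
  exact Finset.mk_mem_product
    (Finset.mem_filter.2 ⟨Finset.mem_union_left Q hp, left_mem_lineThrough p q⟩)
    (Finset.mem_filter.2 ⟨Finset.mem_union_right P hq, right_mem_lineThrough p q⟩)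

end PairCounting

section Bichromatic

variable {P Q : Finset (ℝ × ℝ)}

lemma bichromLines_comm (P Q : Finset (ℝ × ℝ)) : BichromLines P Q = BichromLines Q P := by
  ext L
  exact and_congr_right' and_comm

open Classical in
lemma bichromLines_eq_coe_image₂ (hPQ : Disjoint P Q) :
    BichromLines P Q = Finset.image₂ lineThrough P Q := by
  ext L
  simp only [Finset.coe_image₂, mem_image2, Finset.mem_coe]
  constructor
  · rintro ⟨hL, ⟨p, hp, hpL⟩, q, hq, hqL⟩
    exact ⟨p, hp, q, hq,
      (hL.eq_lineThrough (Finset.disjoint_iff_ne.1 hPQ p hp q hq) hpL hqL).symm⟩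
  · rintro ⟨p, hp, q, hq, rfl⟩
    exact ⟨isLine_lineThrough (Finset.disjoint_iff_ne.1 hPQ p hp q hq),
      ⟨p, hp, left_mem_lineThrough p q⟩, q, hq, right_mem_lineThrough p q⟩

open Classical in
lemma ncard_bichromLines (hPQ : Disjoint P Q) :
    (BichromLines P Q).ncard = #(Finset.image₂ lineThrough P Q) := by
  rw [bichromLines_eq_coe_image₂ hPQ, ncard_coe_finset]

/-- The number `9216` is chosen so that the term `576 N² / (κ + 1)` of `sum_sq_richness_le` is
`n² / 4`, and `192` so that the term `24 N D` is at most `n² / 4`, where `N = 2 n`. -/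
lemma sq_le_of_forall_richness_le {n : ℕ} (hPQ : Disjoint P Q) (hP : #P = n) (hQ : #Q = n)
    (hrich : ∀ L, IsLine L → 192 * richness (P ∪ Q) L ≤ n) :
    (n : ℝ) ^ 2 ≤ 2 * 9216 ^ 2 * (BichromLines P Q).ncard := by
  classical
  rw [ncard_bichromLines hPQ]
  set B := Finset.image₂ lineThrough P Q with hB
  have hBline : ∀ L ∈ B, IsLine L := fun L hL => by
    rw [← Finset.mem_coe, hB, ← bichromLines_eq_coe_image₂ hPQ] at hL
    exact hL.1
  have hBrich : ∀ L ∈ B, richness (P ∪ Q) L ≤ n / 192 := fun L hL =>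
    (Nat.le_div_iff_mul_le (by norm_num)).2 ((mul_comm _ _).trans_le (hrich L (hBline L hL)))
  have hcard : (#(P ∪ Q) : ℝ) = 2 * n := by
    rw [Finset.card_union_of_disjoint hPQ, hP, hQ]
    push_cast
    ring
  have hpairs : (n : ℝ) ^ 2 ≤ ∑ L ∈ B, (richness (P ∪ Q) L : ℝ) ^ 2 := by
    have h := card_mul_card_le_sum_sq_richness P Q
    rw [hP, hQ, ← pow_two] at h
    exact_mod_cast h
  have hsum := sum_sq_richness_le hBline hBrich 9215
  have hD : ((n / 192 : ℕ) : ℝ) ≤ n / 192 := by exact_mod_cast Nat.cast_div_le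
  rw [hcard] at hsum
  norm_num at hsum ⊢
  nlinarith

end Bichromatic

section Fan

variable {L : Set (ℝ × ℝ)} {A D : Finset (ℝ × ℝ)} {y : ℝ × ℝ}

lemma injOn_lineThrough_left (hL : IsLine L) (hy : y ∉ L) : InjOn (lineThrough · y) L := by
  intro a ha b hb (hab : lineThrough a y = lineThrough b y)
  by_contra hne
  have hline : IsLine (lineThrough a y) := isLine_lineThrough (ne_of_mem_of_not_mem ha hy)
  have hbmem : b ∈ lineThrough a y := hab ▸ left_mem_lineThrough b y
  refine hy ?_
  rw [hL.eq_lineThrough hne ha hb,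
    ← hline.eq_lineThrough hne (left_mem_lineThrough a y) hbmem]
  exact right_mem_lineThrough a y

open Classical in
lemma image_inter_image₂_lineThrough_subset (hA : ↑A ⊆ L) (hyL : y ∉ L) (hyD : y ∉ D) :
    A.image (lineThrough · y) ∩ Finset.image₂ lineThrough A D ⊆ D.image (lineThrough y) := by
  intro ℓ hℓ
  obtain ⟨hfan, hold⟩ := Finset.mem_inter.1 hℓ
  obtain ⟨a, ha, rfl⟩ := Finset.mem_image.1 hfan
  obtain ⟨b, -, z, hz, hbz⟩ := Finset.mem_image₂.1 hold
  have hay : a ≠ y := ne_of_mem_of_not_mem (hA ha) hyL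
  refine Finset.mem_image.2 ⟨z, hz, ?_⟩
  exact ((isLine_lineThrough hay).eq_lineThrough (ne_of_mem_of_not_mem hz hyD).symm
    (right_mem_lineThrough a y) (hbz ▸ right_mem_lineThrough b z)).symm

open Classical in
/-- Of the `#A` lines joining `y` to `A`, only those through a point of `D` can have been counted
already, and there are at most `#D` of these. -/
lemma card_add_card_image₂_lineThrough_le (hL : IsLine L) (hA : ↑A ⊆ L) (hyL : y ∉ L)
    (hyD : y ∉ D) :
    #A + #(Finset.image₂ lineThrough A D) ≤
      #(Finset.image₂ lineThrough A (insert y D)) + #D := by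
  have hfan : #(A.image (lineThrough · y)) = #A :=
    Finset.card_image_of_injOn ((injOn_lineThrough_left hL hyL).mono hA)
  have hinter := (Finset.card_le_card (image_inter_image₂_lineThrough_subset hA hyL hyD)).trans
    Finset.card_image_le
  rw [Finset.image₂_insert_right, ← hfan, ← Finset.card_union_add_card_inter]
  exact Nat.add_le_add_left hinter _

open Classical in
lemma card_mul_card_le_card_image₂_lineThrough_add (hL : IsLine L) (hA : ↑A ⊆ L)
    (hD : ∀ y ∈ D, y ∉ L) :
    #A * #D ≤ #(Finset.image₂ lineThrough A D) + (#D).choose 2 := by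
  induction D using Finset.induction_on with
  | empty => simp
  | insert y D hyD ih =>
    have hold := ih fun z hz => hD z (Finset.mem_insert_of_mem hz)
    have hnew := card_add_card_image₂_lineThrough_le hL hA (hD y (Finset.mem_insert_self y D)) hyD
    rw [Finset.card_insert_of_notMem hyD, Nat.choose_succ_succ', Nat.choose_one_right]
    linarith

/-- Use the fan bound for only `k` points of `Q` off the line, so that the loss `k.choose 2` is at
most half of the main term. -/
lemma richness_mul_le_two_mul_ncard {P Q : Finset (ℝ × ℝ)} {k : ℕ} (hPQ : Disjoint P Q)
    (hL : IsLine L) (hkP : k ≤ richness P L) (hkQ : k + richness Q L ≤ #Q) :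
    richness P L * k ≤ 2 * (BichromLines P Q).ncard := by
  classical
  rw [ncard_bichromLines hPQ]
  rw [richness_eq_card_filter] at hkP hkQ ⊢
  have hoff : k ≤ #{q ∈ Q | q ∉ L} := by
    rw [← Finset.card_filter_add_card_filter_not (s := Q) (· ∈ L), add_comm] at hkQ
    exact Nat.le_of_add_le_add_left hkQ
  obtain ⟨D, hD, rfl⟩ := Finset.exists_subset_card_eq hoff
  have hfan := card_mul_card_le_card_image₂_lineThrough_add (A := {p ∈ P | p ∈ L}) hL
    (fun p hp => (Finset.mem_filter.1 hp).2) (fun q hq => (Finset.mem_filter.1 (hD hq)).2)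
  have hsub : #(Finset.image₂ lineThrough {p ∈ P | p ∈ L} D) ≤ #(Finset.image₂ lineThrough P Q) :=
    Finset.card_le_card (Finset.image₂_subset (Finset.filter_subset _ P)
      (hD.trans (Finset.filter_subset _ Q)))
  have hchoose : 2 * (#D).choose 2 ≤ #D * #D := by
    rw [Nat.choose_two_right]
    exact (Nat.mul_div_le _ 2).trans (Nat.mul_le_mul_left _ (Nat.sub_le _ 1))
  have hloss := Nat.mul_le_mul_right #D hkP
  linarith

lemma mul_le_ncard_of_rich_of_le {P Q : Finset (ℝ × ℝ)} {n : ℕ} (hPQ : Disjoint P Q)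
    (hP : #P = n) (hQ : #Q = n) (hL : IsLine L) (hrich : n ≤ 192 * richness (P ∪ Q) L)
    (hle : richness Q L ≤ richness P L) :
    (n * (2 * n - richness (P ∪ Q) L) : ℝ) ≤ 589824 * (BichromLines P Q).ncard := by
  have hPn : richness P L ≤ n := hP ▸ richness_le_card P L
  have hQn : richness Q L ≤ n := hQ ▸ richness_le_card Q L
  rw [richness_union hPQ] at hrich ⊢
  set a := richness P L
  set b := richness Q L
  obtain ⟨k, hka, hkb, hk⟩ : ∃ k ≤ a, k + b ≤ n ∧ 2 * n ≤ a + b + 768 * k :=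
    ⟨min a (n - b), min_le_left _ _, by omega, by omega⟩
  have hfan : (a * k : ℝ) ≤ 2 * (BichromLines P Q).ncard := by
    exact_mod_cast richness_mul_le_two_mul_ncard hPQ hL hka (hkb.trans_eq hQ.symm)
  have hna : (n : ℝ) ≤ 384 * a := by exact_mod_cast (by omega : n ≤ 384 * a)
  have hnk : (2 * n - (a + b : ℕ) : ℝ) ≤ 768 * k := by
    rw [sub_le_iff_le_add']
    exact_mod_cast hk
  calc (n * (2 * n - (a + b : ℕ)) : ℝ) ≤ n * (768 * k) := by gcongr
    _ ≤ 384 * a * (768 * k) := by gcongr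
    _ = 294912 * (a * k) := by ring
    _ ≤ 294912 * (2 * (BichromLines P Q).ncard) := by gcongr
    _ = 589824 * (BichromLines P Q).ncard := by ring

lemma mul_le_ncard_of_rich {P Q : Finset (ℝ × ℝ)} {n : ℕ} (hPQ : Disjoint P Q) (hP : #P = n)
    (hQ : #Q = n) (hL : IsLine L) (hrich : n ≤ 192 * richness (P ∪ Q) L) :
    (n * (2 * n - richness (P ∪ Q) L) : ℝ) ≤ 589824 * (BichromLines P Q).ncard := by
  rcases le_total (richness Q L) (richness P L) with hle | hle
  · exact mul_le_ncard_of_rich_of_le hPQ hP hQ hL hrich hle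
  · rw [Finset.union_comm] at hrich ⊢
    rw [bichromLines_comm]
    exact mul_le_ncard_of_rich_of_le hPQ.symm hQ hP hL hrich hle

end Fan

/-- Beck-type theorem for bichromatic point sets: if every line contains at most
`r` points of `P ∪ Q` with `|P| = |Q| = n`, then there are at least
`C · n · (2n − r)` bichromatic induced lines. -/
theorem bichromatic_beck :
    ∃ C : ℝ, 0 < C ∧ ∀ (P Q : Finset (ℝ × ℝ)) (n r : ℕ),
      Disjoint P Q → P.card = n → Q.card = n →
      (∀ L : Set (ℝ × ℝ), IsLine L → richness (P ∪ Q) L ≤ r) →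
      C * (n : ℝ) * (2 * (n : ℝ) - (r : ℝ)) ≤ ((BichromLines P Q).ncard : ℝ) := by
  refine ⟨1 / 10 ^ 9, by norm_num, fun P Q n r hPQ hP hQ hr => ?_⟩
  suffices h : (n * (2 * n - r) : ℝ) ≤ 10 ^ 9 * (BichromLines P Q).ncard by
    rw [mul_assoc, one_div_mul_eq_div, div_le_iff₀' (by norm_num)]
    exact h
  have hlines : (0 : ℝ) ≤ (BichromLines P Q).ncard := Nat.cast_nonneg _
  by_cases hrich : ∀ L, IsLine L → 192 * richness (P ∪ Q) L ≤ n
  · calc (n * (2 * n - r) : ℝ) ≤ n * (2 * n) := by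
          gcongr
          exact sub_le_self _ r.cast_nonneg
      _ ≤ 10 ^ 9 * (BichromLines P Q).ncard := by
          linarith [sq_le_of_forall_richness_le hPQ hP hQ hrich, hlines]
  · push Not at hrich
    obtain ⟨L, hL, hrich⟩ := hrich
    calc (n * (2 * n - r) : ℝ) ≤ n * (2 * n - richness (P ∪ Q) L) := by
          gcongr
          exact hr L hL
      _ ≤ 10 ^ 9 * (BichromLines P Q).ncard := by
          linarith [mul_le_ncard_of_rich hPQ hP hQ hL hrich.le, hlines]
end
end

section
/- Beck's Induced Lines Theorem: There is an absolute constant C > 0 with the following property. Let S be a set of n points in the Euclidean plane ℝ², and let r be the maximum, over all lines ℓ induced by S, of the number of points of S incident on ℓ. Then the number of lines induced by S is at least C · r · (n − r). -/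
open Set

noncomputable section

/-!
A crossing-free straight-line drawing on `n` vertices has at most `3 n` edges: an edge is charged to
its left endpoint if it is the steepest edge starting there, and otherwise to the first vertex in
the wedge between it and the next steeper edge with the same left endpoint; every vertex is charged
at most three times. Deleting one edge per crossing and sampling vertices at random turns this into
the crossing lemma, and cutting lines at the given points into the Szemerédi–Trotter bound: at most
`6 n / k + 72 n² / k³` lines contain more than `k` of `n` points.

Let `r` be the size of a richest line `L₀`. If `n ≤ 48 r`, take `min (n - r, r / 2)` points off
`L₀`, up to rounding. Each of them lies on `r` lines meeting `L₀`, and few of these lines coincide.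
If `n > 48 r`, count pairs of points by the size of the line they span: by Szemerédi–Trotter, lines
with more than about `10³` points account for at most three quarters of the pairs, so the others
number at least a constant times `n² ≥ 4 r (n - r)`.
-/

open scoped Finset Affine

/-! ### Non-vertical lines -/

/-- The non-vertical line `y = slope * x + intercept` of the coordinate plane `K × K`. -/
@[ext]
structure ObliqueLine (K : Type*) where
  slope : K
  intercept : K

namespace ObliqueLine

variable {K : Type*} [Field K] {ℓ ℓ' : ObliqueLine K} {x y : K}

/-- The ordinate of the point of the line `ℓ` with abscissa `x`. -/
def eval (ℓ : ObliqueLine K) (x : K) : K := ℓ.slope * x + ℓ.intercept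

theorem eq_of_eval_eq (hxy : x ≠ y) (hx : ℓ.eval x = ℓ'.eval x) (hy : ℓ.eval y = ℓ'.eval y) :
    ℓ = ℓ' := by
  simp only [eval] at hx hy
  have hslope : ℓ.slope = ℓ'.slope :=
    mul_right_cancel₀ (sub_ne_zero.2 hxy) (by linear_combination hx - hy)
  exact ObliqueLine.ext hslope (by rw [hslope] at hx; exact add_left_cancel hx)

theorem exists_eval_eq_eval_eq (hxy : x ≠ y) (u v : K) :
    ∃ ℓ : ObliqueLine K, ℓ.eval x = u ∧ ℓ.eval y = v := by
  have hsub : x - y ≠ 0 := sub_ne_zero.2 hxy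
  refine ⟨⟨(u - v) / (x - y), u - (u - v) / (x - y) * x⟩, ?_, ?_⟩
  · simp only [eval]; ring
  · simp only [eval]; field_simp; ring

variable [LinearOrder K] [IsStrictOrderedRing K]

theorem eval_lt_eval_iff_slope_lt (hxy : x < y) (hx : ℓ.eval x = ℓ'.eval x) :
    ℓ.eval y < ℓ'.eval y ↔ ℓ.slope < ℓ'.slope := by
  have hdiff : ℓ'.eval y - ℓ.eval y = (ℓ'.slope - ℓ.slope) * (y - x) := by
    simp only [eval] at hx ⊢
    linear_combination -hx
  rw [← sub_pos, hdiff, mul_pos_iff_of_pos_right (sub_pos.2 hxy), sub_pos]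

theorem exists_eval_eq_of_lt_of_lt (hxy : x < y) (hx : ℓ.eval x < ℓ'.eval x)
    (hy : ℓ'.eval y < ℓ.eval y) : ∃ z ∈ Set.Ioo x y, ℓ.eval z = ℓ'.eval z := by
  simp only [eval] at hx hy ⊢
  have hslope : 0 < ℓ.slope - ℓ'.slope := by nlinarith
  refine ⟨(ℓ'.intercept - ℓ.intercept) / (ℓ.slope - ℓ'.slope), ⟨?_, ?_⟩, ?_⟩
  · rw [lt_div_iff₀ hslope]; linarith
  · rw [div_lt_iff₀ hslope]; linarith
  · field_simp; ring

end ObliqueLine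

/-! ### Straight-line drawings -/

/-- The part of a non-vertical line lying over the interval from `left` to `right`. -/
@[ext]
structure Chord (K : Type*) extends ObliqueLine K where
  left : K
  right : K

namespace Chord

variable {K : Type*} [LinearOrder K]

/-- The abscissae of the two endpoints of a chord. -/
def ends (e : Chord K) : Finset K := {e.left, e.right}

/-- The abscissae of the points of a chord other than its endpoints. -/
def interior (e : Chord K) : Set K := Set.Ioo e.left e.right

/-- Two distinct chords cross if they share a point that is an endpoint of neither. -/
def Crosses [Field K] (e f : Chord K) : Prop :=
  e ≠ f ∧ ∃ x, x ∈ e.interior ∧ x ∈ f.interior ∧ e.eval x = f.eval x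

open scoped Classical in
/-- The ordered pairs of crossing chords of `E`. -/
def crossings [Field K] (E : Finset (Chord K)) : Finset (Chord K × Chord K) :=
  {p ∈ E ×ˢ E | p.1.Crosses p.2}

theorem mem_crossings [Field K] {E : Finset (Chord K)} {p : Chord K × Chord K} :
    p ∈ crossings E ↔ p.1 ∈ E ∧ p.2 ∈ E ∧ p.1.Crosses p.2 := by
  simp only [crossings, Finset.mem_filter, Finset.mem_product, and_assoc]

end Chord

/-- A straight-line drawing of a graph with edge set `E`. No two vertices lie on a common vertical
line, so a vertex is represented by its abscissa `x ∈ V`; its ordinate is `h x`. Edges may cross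
each other, but do not pass through vertices. -/
structure IsDrawing {K : Type*} [Field K] [LinearOrder K] (h : K → K) (V : Finset K)
    (E : Finset (Chord K)) : Prop where
  left_lt_right : ∀ e ∈ E, e.left < e.right
  ends_subset : ∀ e ∈ E, e.ends ⊆ V
  eval_of_mem_ends : ∀ e ∈ E, ∀ x ∈ e.ends, e.eval x = h x
  eval_ne : ∀ e ∈ E, ∀ x ∈ V, x ∈ e.interior → e.eval x ≠ h x

namespace IsDrawing

variable {K : Type*} [Field K] [LinearOrder K] {h : K → K} {V W : Finset K}
  {E E' : Finset (Chord K)} {e f : Chord K} {x : K}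

theorem left_mem (hE : IsDrawing h V E) (he : e ∈ E) : e.left ∈ V :=
  hE.ends_subset e he (by simp [Chord.ends])

theorem right_mem (hE : IsDrawing h V E) (he : e ∈ E) : e.right ∈ V :=
  hE.ends_subset e he (by simp [Chord.ends])

theorem eval_left (hE : IsDrawing h V E) (he : e ∈ E) : e.eval e.left = h e.left :=
  hE.eval_of_mem_ends e he _ (by simp [Chord.ends])

theorem eval_right (hE : IsDrawing h V E) (he : e ∈ E) : e.eval e.right = h e.right :=
  hE.eval_of_mem_ends e he _ (by simp [Chord.ends])

theorem card_ends (hE : IsDrawing h V E) (he : e ∈ E) : #e.ends = 2 :=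
  Finset.card_pair (hE.left_lt_right e he).ne

theorem restrict (hE : IsDrawing h V E) (hE' : E' ⊆ E) (hW : W ⊆ V)
    (hends : ∀ e ∈ E', e.ends ⊆ W) : IsDrawing h W E' where
  left_lt_right e he := hE.left_lt_right e (hE' he)
  ends_subset := hends
  eval_of_mem_ends e he := hE.eval_of_mem_ends e (hE' he)
  eval_ne e he x hx := hE.eval_ne e (hE' he) x (hW hx)

theorem eq_of_toObliqueLine_eq (hE : IsDrawing h V E) (he : e ∈ E) (hf : f ∈ E)
    (hline : e.toObliqueLine = f.toObliqueLine) (hxe : x ∈ e.interior) (hxf : x ∈ f.interior) :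
    e = f := by
  have eval_f (v : K) (hv : v ∈ f.ends) : e.eval v = h v := hline ▸ hE.eval_of_mem_ends f hf v hv
  have eval_e (v : K) (hv : v ∈ e.ends) : f.eval v = h v := hline ▸ hE.eval_of_mem_ends e he v hv
  refine Chord.ext (congrArg ObliqueLine.slope hline) (congrArg ObliqueLine.intercept hline) ?_ ?_
  · refine le_antisymm (not_lt.1 fun hlt ↦ ?_) (not_lt.1 fun hlt ↦ ?_)
    · exact hE.eval_ne f hf _ (hE.left_mem he) ⟨hlt, hxe.1.trans hxf.2⟩
        (eval_e _ (by simp [Chord.ends]))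
    · exact hE.eval_ne e he _ (hE.left_mem hf) ⟨hlt, hxf.1.trans hxe.2⟩
        (eval_f _ (by simp [Chord.ends]))
  · refine le_antisymm (not_lt.1 fun hlt ↦ ?_) (not_lt.1 fun hlt ↦ ?_)
    · exact hE.eval_ne e he _ (hE.right_mem hf) ⟨hxe.1.trans hxf.2, hlt⟩
        (eval_f _ (by simp [Chord.ends]))
    · exact hE.eval_ne f hf _ (hE.right_mem he) ⟨hxf.1.trans hxe.2, hlt⟩
        (eval_e _ (by simp [Chord.ends]))

theorem toObliqueLine_ne_of_crosses (hE : IsDrawing h V E) (he : e ∈ E) (hf : f ∈ E)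
    (hef : e.Crosses f) : e.toObliqueLine ≠ f.toObliqueLine := by
  obtain ⟨hne, x, hxe, hxf, -⟩ := hef
  exact fun hline ↦ hne (hE.eq_of_toObliqueLine_eq he hf hline hxe hxf)

theorem disjoint_ends_of_crosses (hE : IsDrawing h V E) (he : e ∈ E) (hf : f ∈ E)
    (hef : e.Crosses f) : Disjoint e.ends f.ends := by
  have hline := hE.toObliqueLine_ne_of_crosses he hf hef
  obtain ⟨-, x, hxe, -, hx⟩ := hef
  refine Finset.disjoint_left.2 fun v hve hvf ↦ hline (ObliqueLine.eq_of_eval_eq (y := v) ?_ hx ?_)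
  · rintro rfl
    rcases Finset.mem_insert.1 hve with rfl | hv
    · exact hxe.1.false
    · exact (Finset.mem_singleton.1 hv ▸ hxe.2).false
  · exact (hE.eval_of_mem_ends e he v hve).trans (hE.eval_of_mem_ends f hf v hvf).symm

theorem card_ends_union_ends_of_crosses (hE : IsDrawing h V E) (he : e ∈ E) (hf : f ∈ E)
    (hef : e.Crosses f) : #(e.ends ∪ f.ends) = 4 := by
  rw [Finset.card_union_of_disjoint (hE.disjoint_ends_of_crosses he hf hef), hE.card_ends he,
    hE.card_ends hf]

open scoped Classical in
theorem card_crossings_le (hE : IsDrawing h V E) :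
    #(Chord.crossings E) ≤ #(E.image Chord.toObliqueLine) ^ 2 := by
  rw [sq, ← Finset.card_product]
  refine Finset.card_le_card_of_injOn (fun p ↦ (p.1.toObliqueLine, p.2.toObliqueLine)) ?_ ?_
  · intro p hp
    obtain ⟨he, hf, -⟩ := Chord.mem_crossings.1 hp
    exact Finset.mem_product.2 ⟨Finset.mem_image_of_mem _ he, Finset.mem_image_of_mem _ hf⟩
  · rintro ⟨e, f⟩ hef ⟨e', f'⟩ hef' heq
    obtain ⟨he, hf, hcross⟩ := Chord.mem_crossings.1 hef
    obtain ⟨he', hf', -, y, hye, hyf, hy⟩ := Chord.mem_crossings.1 hef'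
    have hline := hE.toObliqueLine_ne_of_crosses he hf hcross
    obtain ⟨-, x, hxe, hxf, hx⟩ := hcross
    obtain ⟨hlinee, hlinef⟩ := Prod.mk.inj heq
    dsimp only at *
    obtain rfl : x = y := by
      by_contra hxy
      rw [← hlinee, ← hlinef] at hy
      exact hline (ObliqueLine.eq_of_eval_eq hxy hx hy)
    exact Prod.ext (hE.eq_of_toObliqueLine_eq he he' hlinee hxe hye)
      (hE.eq_of_toObliqueLine_eq hf hf' hlinef hxf hyf)

end IsDrawing

/-! ### Crossing-free drawings -/

/-- A straight-line drawing without crossings. -/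
structure IsPlaneDrawing {K : Type*} [Field K] [LinearOrder K] (h : K → K) (V : Finset K)
    (E : Finset (Chord K)) : Prop extends IsDrawing h V E where
  not_crosses : ∀ e ∈ E, ∀ f ∈ E, ¬ e.Crosses f

/-- Among the edges of `E` that pass strictly below the vertex `(x, h x)`, the edge `e` is the
highest one. -/
def IsDirectlyBelow {K : Type*} [Field K] [LinearOrder K] (h : K → K) (E : Finset (Chord K))
    (e : Chord K) (x : K) : Prop :=
  x ∈ e.interior ∧ e.eval x < h x ∧
    ∀ f ∈ E, x ∈ f.interior → f.eval x < h x → f.eval x ≤ e.eval x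

/-- Among the edges of `E` that pass strictly above the vertex `(x, h x)`, the edge `e` is the
lowest one. -/
def IsDirectlyAbove {K : Type*} [Field K] [LinearOrder K] (h : K → K) (E : Finset (Chord K))
    (e : Chord K) (x : K) : Prop :=
  x ∈ e.interior ∧ h x < e.eval x ∧
    ∀ f ∈ E, x ∈ f.interior → h x < f.eval x → e.eval x ≤ f.eval x

/-- Two edges `e`, `g` of `E` that issue to the right from a common vertex and are consecutive in
the order of slopes around it, `g` being the steeper one. -/
structure IsWedge {K : Type*} [LinearOrder K] (E : Finset (Chord K)) (e g : Chord K) : Prop where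
  lower_mem : e ∈ E
  upper_mem : g ∈ E
  left_eq : g.left = e.left
  slope_lt : e.slope < g.slope
  slope_le : ∀ f ∈ E, f.left = e.left → e.slope < f.slope → g.slope ≤ f.slope

/-- The vertices, other than the apex, in the closed region between two edges `e` and `g` with
common left endpoint, as far right as both edges reach. -/
def wedgeVertices {K : Type*} [Field K] [LinearOrder K] (h : K → K) (V : Finset K)
    (e g : Chord K) : Finset K :=
  {x ∈ V | e.left < x ∧ x ≤ e.right ∧ x ≤ g.right ∧ e.eval x ≤ h x ∧ h x ≤ g.eval x}

theorem exists_isWedge {K : Type*} [LinearOrder K] {E : Finset (Chord K)} {e f : Chord K}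
    (he : e ∈ E) (hf : f ∈ E) (hleft : f.left = e.left) (hslope : e.slope < f.slope) :
    ∃ g, IsWedge E e g := by
  obtain ⟨g, hg, hmin⟩ := Finset.exists_min_image {f ∈ E | f.left = e.left ∧ e.slope < f.slope}
    (·.slope) ⟨f, Finset.mem_filter.2 ⟨hf, hleft, hslope⟩⟩
  obtain ⟨hgE, hgleft, hgslope⟩ := Finset.mem_filter.1 hg
  exact ⟨g, he, hgE, hgleft, hgslope, fun f hf hleft hslope ↦
    hmin f (Finset.mem_filter.2 ⟨hf, hleft, hslope⟩)⟩

namespace IsPlaneDrawing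

variable {K : Type*} [Field K] [LinearOrder K] {h : K → K} {V : Finset K}
  {E : Finset (Chord K)} {e f g : Chord K} {x y : K}

theorem eq_of_eval_eq (hE : IsPlaneDrawing h V E) (he : e ∈ E) (hf : f ∈ E)
    (hxe : x ∈ e.interior) (hxf : x ∈ f.interior) (hx : e.eval x = f.eval x) : e = f :=
  not_not.1 fun hne ↦ hE.not_crosses e he f hf ⟨hne, x, hxe, hxf, hx⟩

theorem eq_of_isDirectlyBelow (hE : IsPlaneDrawing h V E) (he : e ∈ E) (hf : f ∈ E)
    (hex : IsDirectlyBelow h E e x) (hfx : IsDirectlyBelow h E f x) : e = f := by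
  obtain ⟨hxe, hlte, hmaxe⟩ := hex
  obtain ⟨hxf, hltf, hmaxf⟩ := hfx
  exact hE.eq_of_eval_eq he hf hxe hxf
    (le_antisymm (hmaxf e he hxe hlte) (hmaxe f hf hxf hltf))

theorem eq_of_isDirectlyAbove (hE : IsPlaneDrawing h V E) (he : e ∈ E) (hf : f ∈ E)
    (hex : IsDirectlyAbove h E e x) (hfx : IsDirectlyAbove h E f x) : e = f := by
  obtain ⟨hxe, hlte, hmine⟩ := hex
  obtain ⟨hxf, hltf, hminf⟩ := hfx
  exact hE.eq_of_eval_eq he hf hxe hxf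
    (le_antisymm (hmine f hf hxf hltf) (hminf e he hxe hlte))

theorem eval_apex_eq (hE : IsPlaneDrawing h V E) (hw : IsWedge E e g) :
    e.eval e.left = g.eval e.left := by
  rw [hE.eval_left hw.lower_mem, ← hw.left_eq, hE.eval_left hw.upper_mem]

open scoped Classical in
theorem card_directlyBelow_le (hE : IsPlaneDrawing h V E) :
    #{e ∈ E | ∃ x ∈ V, IsDirectlyBelow h E e x} ≤ #V :=
  Finset.card_le_card_of_forall_subsingleton (IsDirectlyBelow h E)
    (fun _ he ↦ (Finset.mem_filter.1 he).2) fun _ _ _ he _ hf ↦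
      hE.eq_of_isDirectlyBelow (Finset.mem_filter.1 he.1).1 (Finset.mem_filter.1 hf.1).1 he.2 hf.2

variable [IsStrictOrderedRing K]

theorem eval_le_eval_of_lt (hE : IsPlaneDrawing h V E) (he : e ∈ E) (hf : f ∈ E) (hxy : x ≤ y)
    (hex : e.left ≤ x) (hfx : f.left ≤ x) (hye : y ≤ e.right) (hyf : y ≤ f.right)
    (hlt : e.eval x < f.eval x) : e.eval y ≤ f.eval y := by
  rcases hxy.eq_or_lt with rfl | hxy
  · exact hlt.le
  by_contra! hgt
  obtain ⟨z, ⟨hxz, hzy⟩, hz⟩ := ObliqueLine.exists_eval_eq_of_lt_of_lt hxy hlt hgt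
  have hef : e = f := hE.eq_of_eval_eq he hf ⟨hex.trans_lt hxz, hzy.trans_le hye⟩
    ⟨hfx.trans_lt hxz, hzy.trans_le hyf⟩ hz
  exact hlt.ne (by rw [hef])

theorem eq_of_left_eq_of_slope_eq (hE : IsPlaneDrawing h V E) (he : e ∈ E) (hf : f ∈ E)
    (hleft : e.left = f.left) (hslope : e.slope = f.slope) : e = f := by
  have hline : e.toObliqueLine = f.toObliqueLine := by
    refine ObliqueLine.ext hslope ?_
    have heval : e.eval e.left = f.eval f.left := by rw [hE.eval_left he, hE.eval_left hf, hleft]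
    simpa only [ObliqueLine.eval, hslope, hleft, add_right_inj] using heval
  obtain ⟨x, hx, hxr⟩ := exists_between
    (lt_min (hE.left_lt_right e he) (hleft ▸ hE.left_lt_right f hf))
  obtain ⟨hxe, hxf⟩ := lt_min_iff.1 hxr
  exact hE.eq_of_toObliqueLine_eq he hf hline ⟨hx, hxe⟩ ⟨hleft ▸ hx, hxf⟩

theorem eq_of_left_eq_of_right_eq (hE : IsPlaneDrawing h V E) (he : e ∈ E) (hf : f ∈ E)
    (hleft : e.left = f.left) (hright : e.right = f.right) : e = f := by
  refine hE.eq_of_left_eq_of_slope_eq he hf hleft (congrArg ObliqueLine.slope ?_)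
  refine ObliqueLine.eq_of_eval_eq (hE.left_lt_right e he).ne ?_ ?_
  · rw [hE.eval_left he, hleft, hE.eval_left hf]
  · rw [hE.eval_right he, hright, hE.eval_right hf]

theorem eval_lower_lt_eval_upper (hE : IsPlaneDrawing h V E) (hw : IsWedge E e g)
    (hx : e.left < x) : e.eval x < g.eval x :=
  (ObliqueLine.eval_lt_eval_iff_slope_lt hx (hE.eval_apex_eq hw)).2 hw.slope_lt

theorem wedgeVertices_nonempty (hE : IsPlaneDrawing h V E) (hw : IsWedge E e g) :
    (wedgeVertices h V e g).Nonempty := by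
  have heright := hE.left_lt_right e hw.lower_mem
  have hgright : e.left < g.right := hw.left_eq ▸ hE.left_lt_right g hw.upper_mem
  rcases le_total e.right g.right with hle | hle
  · refine ⟨e.right, Finset.mem_filter.2 ⟨hE.right_mem hw.lower_mem, heright, le_rfl, hle, ?_⟩⟩
    rw [← hE.eval_right hw.lower_mem]
    exact ⟨le_rfl, (hE.eval_lower_lt_eval_upper hw heright).le⟩
  · refine ⟨g.right, Finset.mem_filter.2 ⟨hE.right_mem hw.upper_mem, hgright, hle, le_rfl, ?_⟩⟩
    rw [← hE.eval_right hw.upper_mem]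
    exact ⟨(hE.eval_lower_lt_eval_upper hw hgright).le, le_rfl⟩

-- An edge passing over `y` inside the wedge would start left of the apex, at the apex, or inside
-- the wedge, and then cross a side of the wedge, contradict the choice of `g`, or provide a vertex
-- of the wedge left of `y`.
theorem eval_upper_le_of_isLeast (hE : IsPlaneDrawing h V E) (hw : IsWedge E e g)
    (hy : IsLeast (wedgeVertices h V e g : Set K) y) (hf : f ∈ E) (hyf : y ∈ f.interior)
    (hef : e.eval y < f.eval y) : g.eval y ≤ f.eval y := by
  obtain ⟨-, hly, hye, hyg, -, -⟩ := Finset.mem_filter.1 hy.1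
  by_contra! hfg
  rcases lt_trichotomy f.left e.left with hlt | heq | hgt
  · have hapex := hE.eval_left hw.lower_mem
    have hapex' := hE.eval_apex_eq hw
    rcases (hE.eval_ne f hf e.left (hE.left_mem hw.lower_mem) ⟨hlt, hly.trans hyf.2⟩).lt_or_gt
      with hbelow | habove
    · exact hef.not_ge (hE.eval_le_eval_of_lt hf hw.lower_mem hly.le hlt.le le_rfl hyf.2.le hye
        (by rwa [hapex]))
    · exact hfg.not_ge (hE.eval_le_eval_of_lt hw.upper_mem hf hly.le hw.left_eq.le hlt.le hyg
        hyf.2.le (by rwa [← hapex', hapex]))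
  · have hapex : e.eval e.left = f.eval e.left := by
      rw [hE.eval_left hw.lower_mem, ← heq, hE.eval_left hf]
    have hslope := (ObliqueLine.eval_lt_eval_iff_slope_lt hly hapex).1 hef
    refine (hw.slope_le f hf heq hslope).not_gt ?_
    exact (ObliqueLine.eval_lt_eval_iff_slope_lt hly
      (hapex.symm.trans (hE.eval_apex_eq hw))).1 hfg
  · refine hyf.1.not_ge (hy.2 (Finset.mem_filter.2 ⟨hE.left_mem hf, hgt, hyf.1.le.trans hye,
      hyf.1.le.trans hyg, ?_, ?_⟩)) <;> rw [← hE.eval_left hf] <;> by_contra! hlt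
    · exact hef.not_ge (hE.eval_le_eval_of_lt hf hw.lower_mem hyf.1.le le_rfl hgt.le hyf.2.le
        hye hlt)
    · exact hfg.not_ge (hE.eval_le_eval_of_lt hw.upper_mem hf hyf.1.le
        (hw.left_eq.trans_le hgt.le) le_rfl hyg hyf.2.le hlt)

theorem isDirectlyBelow_or_isDirectlyAbove (hE : IsPlaneDrawing h V E) (hw : IsWedge E e g) :
    (∃ x ∈ V, IsDirectlyBelow h E e x) ∨ IsDirectlyAbove h E g e.right := by
  obtain ⟨y, hy⟩ : ∃ y, IsLeast (wedgeVertices h V e g : Set K) y :=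
    ⟨_, Finset.isLeast_min' _ (hE.wedgeVertices_nonempty hw)⟩
  obtain ⟨hyV, hly, hye, hyg, hey, hgy⟩ := Finset.mem_filter.1 hy.1
  rcases hey.lt_or_eq with hlt | heq
  · have hyr : y ≠ e.right := by
      rintro rfl
      exact hlt.ne (hE.eval_right hw.lower_mem)
    refine .inl ⟨y, hyV, ⟨hly, hye.lt_of_ne hyr⟩, hlt, fun f hf hyf hfy ↦ ?_⟩
    by_contra! hef
    exact ((hE.eval_upper_le_of_isLeast hw hy hf hyf hef).trans_lt hfy).not_ge hgy
  · obtain rfl : y = e.right := by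
      by_contra hyr
      exact hE.eval_ne e hw.lower_mem y hyV ⟨hly, hye.lt_of_ne hyr⟩ heq
    have heg := heq ▸ hE.eval_lower_lt_eval_upper hw hly
    have hyr : e.right ≠ g.right := fun hyr ↦
      heg.ne (hyr ▸ (hE.eval_right hw.upper_mem).symm)
    exact .inr ⟨⟨hw.left_eq.trans_lt hly, hyg.lt_of_ne hyr⟩, heg, fun f hf hyf hfy ↦
      hE.eval_upper_le_of_isLeast hw hy hf hyf (heq.trans_lt hfy)⟩

open scoped Classical in
theorem card_steepest_le (hE : IsPlaneDrawing h V E) :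
    #{e ∈ E | ∀ f ∈ E, f.left = e.left → f.slope ≤ e.slope} ≤ #V := by
  refine Finset.card_le_card_of_injOn Chord.left
    (fun e he ↦ hE.left_mem (Finset.mem_filter.1 he).1) fun e he f hf hleft ↦ ?_
  obtain ⟨he, hmaxe⟩ := Finset.mem_filter.1 he
  obtain ⟨hf, hmaxf⟩ := Finset.mem_filter.1 hf
  exact hE.eq_of_left_eq_of_slope_eq he hf hleft
    (le_antisymm (hmaxf e he hleft) (hmaxe f hf hleft.symm))

open scoped Classical in
theorem card_wedge_directlyAbove_le (hE : IsPlaneDrawing h V E) :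
    #{e ∈ E | ∃ g, IsWedge E e g ∧ IsDirectlyAbove h E g e.right} ≤ #V := by
  refine Finset.card_le_card_of_injOn Chord.right
    (fun e he ↦ hE.right_mem (Finset.mem_filter.1 he).1) fun e he f hf hright ↦ ?_
  obtain ⟨he, g, hwe, hge⟩ := Finset.mem_filter.1 he
  obtain ⟨hf, g', hwf, hgf⟩ := Finset.mem_filter.1 hf
  obtain rfl := hE.eq_of_isDirectlyAbove hwe.upper_mem hwf.upper_mem hge (hright ▸ hgf)
  exact hE.eq_of_left_eq_of_right_eq he hf (hwe.left_eq.symm.trans hwf.left_eq) hright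

theorem card_edges_le (hE : IsPlaneDrawing h V E) : #E ≤ 3 * #V := by
  classical
  let steepest : Finset (Chord K) := {e ∈ E | ∀ f ∈ E, f.left = e.left → f.slope ≤ e.slope}
  let below : Finset (Chord K) := {e ∈ E | ∃ x ∈ V, IsDirectlyBelow h E e x}
  let above : Finset (Chord K) := {e ∈ E | ∃ g, IsWedge E e g ∧ IsDirectlyAbove h E g e.right}
  have hcover : E ⊆ steepest ∪ below ∪ above := by
    intro e he
    by_cases hmax : ∀ f ∈ E, f.left = e.left → f.slope ≤ e.slope
    · exact Finset.mem_union_left _ (Finset.mem_union_left _ (Finset.mem_filter.2 ⟨he, hmax⟩))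
    push Not at hmax
    obtain ⟨f, hf, hleft, hslope⟩ := hmax
    obtain ⟨g, hw⟩ := exists_isWedge he hf hleft hslope
    rcases hE.isDirectlyBelow_or_isDirectlyAbove hw with hbelow | habove
    · exact Finset.mem_union_left _ (Finset.mem_union_right _ (Finset.mem_filter.2 ⟨he, hbelow⟩))
    · exact Finset.mem_union_right _ (Finset.mem_filter.2 ⟨he, g, hw, habove⟩)
  calc #E ≤ #(steepest ∪ below ∪ above) := Finset.card_le_card hcover
    _ ≤ #steepest + #below + #above := by grw [Finset.card_union_le, Finset.card_union_le]
    _ ≤ #V + #V + #V := by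
      gcongr
      exacts [hE.card_steepest_le, hE.card_directlyBelow_le, hE.card_wedge_directlyAbove_le]
    _ = 3 * #V := by ring

end IsPlaneDrawing

theorem IsDrawing.card_edges_le_add_card_crossings {K : Type*} [Field K] [LinearOrder K]
    [IsStrictOrderedRing K] {h : K → K} {V : Finset K} {E : Finset (Chord K)}
    (hE : IsDrawing h V E) : #E ≤ 3 * #V + #(Chord.crossings E) := by
  classical
  let crossed : Finset (Chord K) := (Chord.crossings E).image Prod.fst
  have hplane : IsPlaneDrawing h V (E \ crossed) :=
    { toIsDrawing := hE.restrict Finset.sdiff_subset subset_rfl fun e he ↦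
        hE.ends_subset e (Finset.mem_sdiff.1 he).1
      not_crosses := fun e he f hf hef ↦ (Finset.mem_sdiff.1 he).2 (Finset.mem_image.2 ⟨(e, f),
        Chord.mem_crossings.2 ⟨(Finset.mem_sdiff.1 he).1, (Finset.mem_sdiff.1 hf).1, hef⟩, rfl⟩) }
  calc #E ≤ #(E \ crossed) + #crossed := Finset.card_le_card_sdiff_add_card
    _ ≤ 3 * #V + #(Chord.crossings E) := add_le_add hplane.card_edges_le Finset.card_image_le

/-! ### Random sampling -/

section Sampling

/-- The expectation of `f W` for a random subset `W` of `V` that contains each element of `V`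
independently with probability `p`. -/
def sampleExpectation {α R : Type*} [CommRing R] (V : Finset α) (p : R) (f : Finset α → R) : R :=
  ∑ W ∈ V.powerset, p ^ #W * (1 - p) ^ (#V - #W) * f W

variable {α ι : Type*} {R : Type*} [CommRing R] {V : Finset α} {p : R}

theorem sampleExpectation_ite_subset [DecidableEq α] {Z : Finset α} (hZ : Z ⊆ V) :
    sampleExpectation V p (fun W ↦ if Z ⊆ W then 1 else 0) = p ^ #Z := by
  have hfilter : {W ∈ V.powerset | Z ⊆ W} = Finset.Icc Z V := by
    ext W
    simp [and_comm]
  have hinj : Set.InjOn (Z ∪ ·) (V \ Z).powerset := fun s hs t ht hst ↦ by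
    have hs' := Finset.disjoint_sdiff.mono_right (Finset.mem_powerset.1 hs)
    have ht' := Finset.disjoint_sdiff.mono_right (Finset.mem_powerset.1 ht)
    rw [← Finset.union_sdiff_cancel_left hs', ← Finset.union_sdiff_cancel_left ht']
    exact congrArg (· \ Z) hst
  have hweight (s : Finset α) (hs : s ∈ (V \ Z).powerset) :
      p ^ #(Z ∪ s) * (1 - p) ^ (#V - #(Z ∪ s)) =
        p ^ #Z * (p ^ #s * (1 - p) ^ (#(V \ Z) - #s)) := by
    rw [Finset.card_union_of_disjoint
      (Finset.disjoint_sdiff.mono_right (Finset.mem_powerset.1 hs)),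
      Finset.card_sdiff_of_subset hZ, Nat.sub_add_eq, pow_add, mul_assoc]
  simp only [sampleExpectation, mul_ite, mul_one, mul_zero]
  rw [← Finset.sum_filter, hfilter, Finset.Icc_eq_image_powerset hZ, Finset.sum_image hinj,
    Finset.sum_congr rfl hweight, ← Finset.mul_sum, Finset.sum_pow_mul_eq_add_pow,
    add_sub_cancel, one_pow, mul_one]

theorem sampleExpectation_card_filter_subset [DecidableEq α] {I : Finset ι} {s : ι → Finset α}
    {k : ℕ} (hs : ∀ i ∈ I, s i ⊆ V) (hk : ∀ i ∈ I, #(s i) = k) :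
    sampleExpectation V p (fun W ↦ #{i ∈ I | s i ⊆ W}) = #I * p ^ k := by
  calc sampleExpectation V p (fun W ↦ #{i ∈ I | s i ⊆ W})
      = ∑ i ∈ I, sampleExpectation V p (fun W ↦ if s i ⊆ W then 1 else 0) := by
        simp only [sampleExpectation, Finset.card_filter, Nat.cast_sum, Nat.cast_ite, Nat.cast_one,
          Nat.cast_zero, Finset.mul_sum]
        exact Finset.sum_comm
    _ = ∑ _i ∈ I, p ^ k := Finset.sum_congr rfl fun i hi ↦ by
        rw [sampleExpectation_ite_subset (hs i hi), hk i hi]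
    _ = #I * p ^ k := by rw [Finset.sum_const, nsmul_eq_mul]

theorem sampleExpectation_card : sampleExpectation V p (fun W ↦ #W) = #V * p := by
  classical
  rw [← pow_one p, ← sampleExpectation_card_filter_subset (V := V) (I := V) (s := fun v ↦ {v})
    (by simp) (by simp), pow_one]
  refine Finset.sum_congr rfl fun W hW ↦ ?_
  simp only [Finset.singleton_subset_iff, Finset.filter_mem_eq_inter,
    Finset.inter_eq_right.2 (Finset.mem_powerset.1 hW)]

theorem sampleExpectation_mono [LinearOrder R] [IsStrictOrderedRing R] {f g : Finset α → R}
    (hp₀ : 0 ≤ p) (hp₁ : p ≤ 1) (hfg : ∀ W ⊆ V, f W ≤ g W) :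
    sampleExpectation V p f ≤ sampleExpectation V p g :=
  Finset.sum_le_sum fun W hW ↦ mul_le_mul_of_nonneg_left (hfg W (Finset.mem_powerset.1 hW))
    (mul_nonneg (pow_nonneg hp₀ _) (pow_nonneg (sub_nonneg.2 hp₁) _))

theorem sampleExpectation_mul_add (c : R) (f g : Finset α → R) :
    sampleExpectation V p (fun W ↦ c * f W + g W) =
      c * sampleExpectation V p f + sampleExpectation V p g := by
  simp only [sampleExpectation, Finset.mul_sum, ← Finset.sum_add_distrib]
  exact Finset.sum_congr rfl fun W _ ↦ by ring

end Sampling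

/-! ### The crossing lemma -/

namespace IsDrawing

variable {K : Type*} [Field K] [LinearOrder K] [IsStrictOrderedRing K] {h : K → K}
  {V : Finset K} {E : Finset (Chord K)}

theorem card_filter_ends_subset_le (hE : IsDrawing h V E) {W : Finset K} (hW : W ⊆ V) :
    #{e ∈ E | e.ends ⊆ W} ≤ 3 * #W + #{c ∈ Chord.crossings E | c.1.ends ∪ c.2.ends ⊆ W} := by
  have hcross : Chord.crossings {e ∈ E | e.ends ⊆ W} =
      {c ∈ Chord.crossings E | c.1.ends ∪ c.2.ends ⊆ W} := by
    ext c
    simp only [Chord.mem_crossings, Finset.mem_filter, Finset.union_subset_iff]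
    tauto
  rw [← hcross]
  exact (hE.restrict (Finset.filter_subset _ _) hW
    fun e he ↦ (Finset.mem_filter.1 he).2).card_edges_le_add_card_crossings

theorem card_edges_mul_sq_le (hE : IsDrawing h V E) {p : ℝ} (hp₀ : 0 ≤ p) (hp₁ : p ≤ 1) :
    #E * p ^ 2 ≤ 3 * (#V * p) + #(Chord.crossings E) * p ^ 4 := by
  have hedges : sampleExpectation V p (fun W ↦ #{e ∈ E | e.ends ⊆ W}) = #E * p ^ 2 :=
    sampleExpectation_card_filter_subset hE.ends_subset fun e he ↦ hE.card_ends he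
  have hcrossings : sampleExpectation V p
      (fun W ↦ #{c ∈ Chord.crossings E | c.1.ends ∪ c.2.ends ⊆ W}) =
        #(Chord.crossings E) * p ^ 4 := by
    refine sampleExpectation_card_filter_subset (fun c hc ↦ ?_) fun c hc ↦ ?_ <;>
      obtain ⟨he, hf, hef⟩ := Chord.mem_crossings.1 hc
    · exact Finset.union_subset (hE.ends_subset _ he) (hE.ends_subset _ hf)
    · exact hE.card_ends_union_ends_of_crosses he hf hef
  rw [← hedges, ← sampleExpectation_card, ← hcrossings, ← sampleExpectation_mul_add]
  exact sampleExpectation_mono hp₀ hp₁ fun W hW ↦ mod_cast hE.card_filter_ends_subset_le hW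

-- The sampling probability `p = 6 * #V / #E` makes the linear term equal to half of the quadratic
-- one.
theorem card_edges_pow_three_le (hE : IsDrawing h V E) (hVE : 6 * #V ≤ #E) :
    (#E : ℝ) ^ 3 ≤ 72 * #V ^ 2 * #(Chord.crossings E) := by
  rcases E.eq_empty_or_nonempty with rfl | hne
  · rw [Finset.card_empty, Nat.cast_zero, zero_pow three_ne_zero]
    positivity
  have hE₀ : (0 : ℝ) < #E := mod_cast hne.card_pos
  obtain ⟨e, he⟩ := hne
  have hV₀ : (0 : ℝ) < #V := mod_cast Finset.card_pos.2 ⟨_, hE.left_mem he⟩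
  have hVE' : 6 * (#V : ℝ) ≤ #E := mod_cast hVE
  have hsample := hE.card_edges_mul_sq_le (p := 6 * #V / #E) (by positivity)
    ((div_le_one hE₀).2 hVE')
  have hquad : (#E : ℝ) * (6 * #V / #E) ^ 2 = 36 * #V ^ 2 / #E := by field_simp; ring
  have hlin : (3 : ℝ) * (#V * (6 * #V / #E)) = 18 * #V ^ 2 / #E := by field_simp; ring
  have hquart : (#(Chord.crossings E) : ℝ) * (6 * #V / #E) ^ 4 =
      1296 * #V ^ 4 * #(Chord.crossings E) / #E ^ 4 := by field_simp; ring
  rw [hquad, hlin, hquart] at hsample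
  have hdiff : 18 * (#V : ℝ) ^ 2 / #E ≤ 1296 * #V ^ 4 * #(Chord.crossings E) / #E ^ 4 := by
    linarith [show (36 : ℝ) * #V ^ 2 / #E = 18 * #V ^ 2 / #E + 18 * #V ^ 2 / #E by ring]
  rw [div_le_div_iff₀ hE₀ (by positivity)] at hdiff
  have hpos : (0 : ℝ) < 18 * #V ^ 2 * #E := by positivity
  refine le_of_mul_le_mul_left ?_ hpos
  linarith

end IsDrawing

/-! ### The Szemerédi–Trotter bound -/

/-- The pairs of consecutive elements of `A`. -/
def consecutivePairs {α : Type*} [LinearOrder α] (A : Finset α) : Finset (α × α) :=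
  {p ∈ A ×ˢ A | p.1 < p.2 ∧ ∀ x ∈ A, ¬ (p.1 < x ∧ x < p.2)}

theorem mem_consecutivePairs {α : Type*} [LinearOrder α] {A : Finset α} {p : α × α} :
    p ∈ consecutivePairs A ↔
      p.1 ∈ A ∧ p.2 ∈ A ∧ p.1 < p.2 ∧ ∀ x ∈ A, ¬ (p.1 < x ∧ x < p.2) := by
  simp only [consecutivePairs, Finset.mem_filter, Finset.mem_product, and_assoc]

theorem card_le_card_consecutivePairs_add_one {α : Type*} [LinearOrder α] (A : Finset α) :
    #A ≤ #(consecutivePairs A) + 1 := by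
  rcases A.eq_empty_or_nonempty with rfl | hA
  · simp
  suffices hsurj : Set.SurjOn Prod.fst (consecutivePairs A : Set (α × α)) (A.erase (A.max' hA)) by
    have hcard := Finset.card_le_card_of_surjOn _ hsurj
    rw [Finset.card_erase_of_mem (A.max'_mem hA)] at hcard
    lia
  intro x hx
  obtain ⟨hxmax, hxA⟩ := Finset.mem_erase.1 hx
  have hne : {y ∈ A | x < y}.Nonempty :=
    ⟨A.max' hA, Finset.mem_filter.2 ⟨A.max'_mem hA, (A.le_max' x hxA).lt_of_ne hxmax⟩⟩
  obtain ⟨hyA, hxy⟩ := Finset.mem_filter.1 (Finset.min'_mem _ hne)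
  refine ⟨(x, _), mem_consecutivePairs.2 ⟨hxA, hyA, hxy, ?_⟩, rfl⟩
  rintro z hzA ⟨hxz, hzy⟩
  exact hzy.not_ge (Finset.min'_le _ z (Finset.mem_filter.2 ⟨hzA, hxz⟩))

section SzemerediTrotter

variable {K : Type*} [Field K] [LinearOrder K]

/-- The abscissae of the points of the graph of `h` over `V` that lie on the line `ℓ`. -/
def graphPoints (h : K → K) (V : Finset K) (ℓ : ObliqueLine K) : Finset K :=
  {x ∈ V | ℓ.eval x = h x}

open scoped Classical in
/-- The segments joining consecutive points of the graph of `h` over `V` on the lines of `Ls`. -/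
def graphChords (h : K → K) (V : Finset K) (Ls : Finset (ObliqueLine K)) : Finset (Chord K) :=
  (Ls.sigma fun ℓ ↦ consecutivePairs (graphPoints h V ℓ)).image fun s ↦ ⟨s.1, s.2.1, s.2.2⟩

variable {h : K → K} {V : Finset K} {Ls : Finset (ObliqueLine K)}

theorem mem_graphChords {e : Chord K} : e ∈ graphChords h V Ls ↔
    e.toObliqueLine ∈ Ls ∧
      (e.left, e.right) ∈ consecutivePairs (graphPoints h V e.toObliqueLine) := by
  simp only [graphChords, Finset.mem_image, Finset.mem_sigma]
  constructor
  · rintro ⟨s, hs, rfl⟩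
    exact hs
  · exact fun he ↦ ⟨⟨e.toObliqueLine, e.left, e.right⟩, he, rfl⟩

theorem isDrawing_graphChords : IsDrawing h V (graphChords h V Ls) := by
  have hpoint {ℓ : ObliqueLine K} {x : K} : x ∈ graphPoints h V ℓ ↔ x ∈ V ∧ ℓ.eval x = h x :=
    Finset.mem_filter
  have hends (e : Chord K) (he : e ∈ graphChords h V Ls) :
      ∀ x ∈ e.ends, x ∈ V ∧ e.eval x = h x := by
    obtain ⟨hleft, hright, -⟩ := mem_consecutivePairs.1 (mem_graphChords.1 he).2
    simpa [Chord.ends, hpoint] using And.intro hleft hright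
  refine ⟨fun e he ↦ ?_, fun e he x hx ↦ (hends e he x hx).1,
    fun e he x hx ↦ (hends e he x hx).2, fun e he x hxV hxe hx ↦ ?_⟩ <;>
  obtain ⟨-, -, hlt, hbetween⟩ := mem_consecutivePairs.1 (mem_graphChords.1 he).2
  · exact hlt
  · exact hbetween x (hpoint.2 ⟨hxV, hx⟩) hxe

theorem card_mul_le_card_graphChords {k : ℕ} (hk : ∀ ℓ ∈ Ls, k < #(graphPoints h V ℓ)) :
    #Ls * k ≤ #(graphChords h V Ls) := by
  classical
  have hinj : Function.Injective fun s : (_ : ObliqueLine K) × K × K ↦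
      (⟨s.1, s.2.1, s.2.2⟩ : Chord K) := by
    rintro ⟨ℓ, x, y⟩ ⟨ℓ', x', y'⟩ heq
    obtain ⟨rfl, rfl, rfl⟩ := Chord.mk.inj heq
    rfl
  rw [graphChords, Finset.card_image_of_injective _ hinj, Finset.card_sigma, ← smul_eq_mul]
  refine Finset.card_nsmul_le_sum _ _ _ fun ℓ hℓ ↦ ?_
  have hconsecutive := card_le_card_consecutivePairs_add_one (graphPoints h V ℓ)
  have := hk ℓ hℓ
  lia

theorem card_crossings_graphChords_le : #(Chord.crossings (graphChords h V Ls)) ≤ #Ls ^ 2 := by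
  classical
  refine isDrawing_graphChords.card_crossings_le.trans ?_
  gcongr
  exact Finset.image_subset_iff.2 fun e he ↦ (mem_graphChords.1 he).1

theorem szemeredi_trotter_graph [IsStrictOrderedRing K] {k : ℕ}
    (hk : ∀ ℓ ∈ Ls, k < #(graphPoints h V ℓ)) :
    (#Ls : ℝ) * k ^ 3 ≤ 6 * #V * k ^ 2 + 72 * #V ^ 2 := by
  have hedges : (#Ls : ℝ) * k ≤ #(graphChords h V Ls) := mod_cast card_mul_le_card_graphChords hk
  have hcross : (#(Chord.crossings (graphChords h V Ls)) : ℝ) ≤ #Ls ^ 2 :=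
    mod_cast card_crossings_graphChords_le
  rcases le_total (6 * #V) #(graphChords h V Ls) with hmany | hfew
  · rcases Ls.eq_empty_or_nonempty with rfl | hne
    · rw [Finset.card_empty, Nat.cast_zero, zero_mul]
      positivity
    have hLs : (0 : ℝ) < #Ls ^ 2 := mod_cast pow_pos hne.card_pos 2
    have hcubed : (#Ls : ℝ) ^ 2 * (#Ls * k ^ 3) ≤ #Ls ^ 2 * (72 * #V ^ 2) :=
      calc (#Ls : ℝ) ^ 2 * (#Ls * k ^ 3) = (#Ls * k : ℝ) ^ 3 := by ring
        _ ≤ (#(graphChords h V Ls) : ℝ) ^ 3 := by gcongr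
        _ ≤ 72 * (#V : ℝ) ^ 2 * #(Chord.crossings (graphChords h V Ls)) :=
          isDrawing_graphChords.card_edges_pow_three_le hmany
        _ ≤ 72 * (#V : ℝ) ^ 2 * #Ls ^ 2 := by gcongr
        _ = (#Ls : ℝ) ^ 2 * (72 * #V ^ 2) := by ring
    have hle := le_of_mul_le_mul_left hcubed hLs
    have : (0 : ℝ) ≤ 6 * #V * k ^ 2 := by positivity
    linarith
  · have hfew' : (#(graphChords h V Ls) : ℝ) ≤ 6 * #V := mod_cast hfew
    calc (#Ls : ℝ) * k ^ 3 = #Ls * k * (k : ℝ) ^ 2 := by ring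
      _ ≤ 6 * (#V : ℝ) * k ^ 2 :=
        mul_le_mul_of_nonneg_right (hedges.trans hfew') (by positivity)
      _ ≤ 6 * (#V : ℝ) * k ^ 2 + 72 * #V ^ 2 := le_add_of_nonneg_right (by positivity)

end SzemerediTrotter

/-! ### Layer sums -/

section SumTwoMul

variable {f : ℕ → ℝ} {N a b : ℝ}

theorem sum_range_two_mul_mul_le_of_le (hf : ∀ k, f k ≤ N) (m : ℕ) :
    ∑ k ∈ Finset.range m, 2 * k * f k ≤ m * (m - 1) * N := by
  induction m with
  | zero => simp
  | succ m ih =>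
    rw [Finset.sum_range_succ]
    have hlast : 2 * m * f m ≤ 2 * m * N := mul_le_mul_of_nonneg_left (hf m) (by positivity)
    push_cast
    linarith

theorem sum_Ioo_two_mul_mul_le (ha : 0 ≤ a) (hb : 0 ≤ b)
    (hf : ∀ k : ℕ, f k * k ^ 3 ≤ a * k ^ 2 + b) (m r : ℕ) :
    ∑ k ∈ Finset.Ioo m r, 2 * k * f k ≤ 2 * a * r + 4 * b / (m + 1) := by
  calc ∑ k ∈ Finset.Ioo m r, 2 * k * f k
      ≤ ∑ k ∈ Finset.Ioo m r, (2 * a + 2 * b * ((k : ℝ) ^ 2)⁻¹) := by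
        refine Finset.sum_le_sum fun k hk ↦ ?_
        have hk₀ : (0 : ℝ) < k := mod_cast (Finset.mem_Ioo.1 hk).1.pos
        rw [← div_eq_mul_inv, ← sub_le_iff_le_add', le_div_iff₀ (by positivity)]
        linarith [hf k]
    _ = #(Finset.Ioo m r) * (2 * a) + 2 * b * ∑ k ∈ Finset.Ioo m r, ((k : ℝ) ^ 2)⁻¹ := by
        rw [Finset.sum_add_distrib, Finset.sum_const, nsmul_eq_mul, Finset.mul_sum]
    _ ≤ r * (2 * a) + 2 * b * (2 / (m + 1)) := by
        gcongr
        · rw [Nat.card_Ioo]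
          lia
        · exact sum_Ioo_inv_sq_le m r
    _ = 2 * a * r + 4 * b / (m + 1) := by ring

theorem sum_range_two_mul_mul_le (hf₀ : ∀ k, 0 ≤ f k) (hfN : ∀ k, f k ≤ N) (ha : 0 ≤ a)
    (hb : 0 ≤ b) (hf : ∀ k : ℕ, f k * k ^ 3 ≤ a * k ^ 2 + b) (r m : ℕ) :
    ∑ k ∈ Finset.range r, 2 * k * f k ≤ (m + 1) ^ 2 * N + 2 * a * r + 4 * b / (m + 1) := by
  have hsplit : Finset.range r ⊆ Finset.range (m + 1) ∪ Finset.Ioo m r := by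
    intro k hk
    simp only [Finset.mem_union, Finset.mem_range, Finset.mem_Ioo] at hk ⊢
    lia
  have hdisj : Disjoint (Finset.range (m + 1)) (Finset.Ioo m r) :=
    Finset.disjoint_left.2 fun k hk hk' ↦ by
      simp only [Finset.mem_range, Finset.mem_Ioo] at hk hk'
      lia
  have hsmall := sum_range_two_mul_mul_le_of_le hfN (m + 1)
  have hN : 0 ≤ (m + 1) * N := mul_nonneg (by positivity) ((hf₀ 0).trans (hfN 0))
  calc ∑ k ∈ Finset.range r, 2 * k * f k
      ≤ ∑ k ∈ Finset.range (m + 1) ∪ Finset.Ioo m r, 2 * k * f k :=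
        Finset.sum_le_sum_of_subset_of_nonneg hsplit fun k _ _ ↦
          mul_nonneg (by positivity) (hf₀ k)
    _ = ∑ k ∈ Finset.range (m + 1), 2 * k * f k + ∑ k ∈ Finset.Ioo m r, 2 * k * f k :=
        Finset.sum_union hdisj
    _ ≤ (m + 1) ^ 2 * N + (2 * a * r + 4 * b / (m + 1)) := by
        refine add_le_add ?_ (sum_Ioo_two_mul_mul_le ha hb hf m r)
        push_cast at hsmall
        linarith
    _ = (m + 1) ^ 2 * N + 2 * a * r + 4 * b / (m + 1) := by ring

end SumTwoMul

/-! ### Linear spaces -/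

/-- A finite linear space: any two distinct points of `S` lie on exactly one of the lines indexed
by `𝓛`, where `B L` is the set of points on the line `L`. -/
structure IsLinearSpace {α β : Type*} (S : Finset α) (𝓛 : Finset β) (B : β → Finset α) :
    Prop where
  subset : ∀ L ∈ 𝓛, B L ⊆ S
  exists_mem : ∀ p ∈ S, ∀ q ∈ S, p ≠ q → ∃ L ∈ 𝓛, p ∈ B L ∧ q ∈ B L
  eq_of_mem : ∀ L ∈ 𝓛, ∀ M ∈ 𝓛, ∀ p q, p ≠ q → p ∈ B L → q ∈ B L → p ∈ B M → q ∈ B M → L = M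

namespace IsLinearSpace

variable {α β : Type*} {S T : Finset α} {𝓛 : Finset β} {B : β → Finset α}
  {L₀ : β} {q : α} {r : ℕ}

theorem sum_card_offDiag_inter [DecidableEq α] (h : IsLinearSpace S 𝓛 B) (hT : T ⊆ S) :
    ∑ L ∈ 𝓛, #(T ∩ B L).offDiag = #T.offDiag := by
  rw [← Finset.card_biUnion]
  · congr 1
    ext ⟨p, q⟩
    simp only [Finset.mem_biUnion, Finset.mem_offDiag, Finset.mem_inter]
    constructor
    · rintro ⟨L, -, ⟨hp, -⟩, ⟨hq, -⟩, hpq⟩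
      exact ⟨hp, hq, hpq⟩
    · rintro ⟨hp, hq, hpq⟩
      obtain ⟨L, hL, hpL, hqL⟩ := h.exists_mem p (hT hp) q (hT hq) hpq
      exact ⟨L, hL, ⟨hp, hpL⟩, ⟨hq, hqL⟩, hpq⟩
  · refine fun L hL M hM hLM ↦ Finset.disjoint_left.2 fun ⟨p, q⟩ hpL hpM ↦ hLM ?_
    simp only [Finset.mem_offDiag, Finset.mem_inter] at hpL hpM
    exact h.eq_of_mem L hL M hM p q hpL.2.2 hpL.1.2 hpL.2.1.2 hpM.1.2 hpM.2.1.2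

theorem card_line_le_card_lines_through [DecidableEq α] (h : IsLinearSpace S 𝓛 B) (hL₀ : L₀ ∈ 𝓛)
    (hq : q ∈ S) (hqL₀ : q ∉ B L₀) : #(B L₀) ≤ #{L ∈ 𝓛 | q ∈ B L} := by
  refine Finset.card_le_card_of_forall_subsingleton (fun p L ↦ p ∈ B L) (fun p hp ↦ ?_) ?_
  · obtain ⟨L, hL, hpL, hqL⟩ := h.exists_mem p (h.subset L₀ hL₀ hp) q hq
      (ne_of_mem_of_not_mem hp hqL₀)
    exact ⟨L, Finset.mem_filter.2 ⟨hL, hqL⟩, hpL⟩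
  · rintro L hL p ⟨hp, hpL⟩ p' ⟨hp', hpL'⟩
    obtain ⟨hL, hqL⟩ := Finset.mem_filter.1 hL
    by_contra hpp'
    obtain rfl := h.eq_of_mem L hL L₀ hL₀ p p' hpp' hpL hpL' hp hp'
    exact hqL₀ hqL

theorem card_mul_card_line_add_card_le [DecidableEq α] (h : IsLinearSpace S 𝓛 B) (hL₀ : L₀ ∈ 𝓛)
    (hT : T ⊆ S \ B L₀) : #T * #(B L₀) + #T ≤ #𝓛 + #T ^ 2 := by
  have hincidences : #T * #(B L₀) ≤ #𝓛 + #T.offDiag :=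
    calc #T * #(B L₀) ≤ ∑ q ∈ T, #{L ∈ 𝓛 | q ∈ B L} := by
          rw [← smul_eq_mul]
          refine Finset.card_nsmul_le_sum _ _ _ fun q hq ↦ ?_
          obtain ⟨hqS, hqL₀⟩ := Finset.mem_sdiff.1 (hT hq)
          exact h.card_line_le_card_lines_through hL₀ hqS hqL₀
      _ = ∑ L ∈ 𝓛, #(T ∩ B L) := by
          simp only [← Finset.filter_mem_eq_inter]
          exact Finset.sum_card_bipartiteAbove_eq_sum_card_bipartiteBelow fun q L ↦ q ∈ B L
      _ ≤ ∑ L ∈ 𝓛, (1 + #(T ∩ B L).offDiag) := by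
          refine Finset.sum_le_sum fun L _ ↦ ?_
          rw [Finset.offDiag_card]
          rcases Nat.lt_or_ge #(T ∩ B L) 2 with hlt | hge
          · lia
          · have := Nat.mul_le_mul_right #(T ∩ B L) hge
            lia
      _ = #𝓛 + #T.offDiag := by
          rw [Finset.sum_add_distrib, Finset.sum_const, smul_eq_mul, mul_one,
            h.sum_card_offDiag_inter (hT.trans Finset.sdiff_subset)]
  rw [Finset.offDiag_card] at hincidences
  have := Nat.le_mul_self #T
  rw [sq]
  lia

theorem card_line_mul_card_sdiff_le [DecidableEq α] (h : IsLinearSpace S 𝓛 B) (hL₀ : L₀ ∈ 𝓛)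
    {c : ℕ} (hc : #(S \ B L₀) ≤ c * #(B L₀)) :
    #(B L₀) * #(S \ B L₀) ≤ (4 * c + 2) * #𝓛 := by
  obtain ⟨T, hT, hcard⟩ := Finset.exists_subset_card_eq
    (min_le_left #(S \ B L₀) ((#(B L₀) + 1) / 2))
  have hcount := h.card_mul_card_line_add_card_le hL₀ hT
  have hhalf : 2 * #T ≤ #(B L₀) + 1 := by lia
  have htwice : #T * #(B L₀) ≤ 2 * #𝓛 := by nlinarith
  rcases le_total #(S \ B L₀) ((#(B L₀) + 1) / 2) with hfew | hmany
  · rw [min_eq_left hfew] at hcard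
    rw [hcard] at htwice
    nlinarith
  · have hlarge : #(B L₀) ≤ 2 * #T := by lia
    calc #(B L₀) * #(S \ B L₀) ≤ 2 * #T * (c * #(B L₀)) := Nat.mul_le_mul hlarge hc
      _ ≤ (4 * c + 2) * #𝓛 := by nlinarith

theorem card_offDiag_eq_sum_range (h : IsLinearSpace S 𝓛 B) (hr : ∀ L ∈ 𝓛, #(B L) ≤ r) :
    #S.offDiag = ∑ k ∈ Finset.range r, 2 * k * #{L ∈ 𝓛 | k < #(B L)} := by
  classical
  have hlayers (L : β) (hL : L ∈ 𝓛) :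
      #(S ∩ B L).offDiag = ∑ k ∈ Finset.range r with k < #(B L), 2 * k := by
    have hrange : {k ∈ Finset.range r | k < #(B L)} = Finset.range #(B L) := by
      ext k
      have := hr L hL
      simp only [Finset.mem_filter, Finset.mem_range]
      lia
    rw [Finset.inter_eq_right.2 (h.subset L hL), Finset.offDiag_card, hrange, ← Finset.mul_sum,
      mul_comm 2, Finset.sum_range_id_mul_two, Nat.mul_sub_one]
  calc #S.offDiag = ∑ L ∈ 𝓛, ∑ k ∈ Finset.range r with k < #(B L), 2 * k := by
        rw [← h.sum_card_offDiag_inter subset_rfl, Finset.sum_congr rfl hlayers]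
    _ = ∑ k ∈ Finset.range r, ∑ L ∈ 𝓛 with k < #(B L), 2 * k := by
        simp only [Finset.sum_filter]
        exact Finset.sum_comm
    _ = ∑ k ∈ Finset.range r, 2 * k * #{L ∈ 𝓛 | k < #(B L)} := by
        simp only [Finset.sum_const, smul_eq_mul, mul_comm]

theorem card_sq_sub_card_le (h : IsLinearSpace S 𝓛 B) (hr : ∀ L ∈ 𝓛, #(B L) ≤ r)
    (hrich : ∀ k : ℕ, (#{L ∈ 𝓛 | k < #(B L)} : ℝ) * k ^ 3 ≤ 6 * #S * k ^ 2 + 72 * #S ^ 2)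
    (m : ℕ) :
    (#S : ℝ) ^ 2 - #S ≤
      (m + 1) ^ 2 * #𝓛 + 2 * (6 * #S) * r + 4 * (72 * #S ^ 2) / (m + 1) := by
  have hpairs : (#S : ℝ) ^ 2 - #S =
      ∑ k ∈ Finset.range r, 2 * (k : ℝ) * #{L ∈ 𝓛 | k < #(B L)} := by
    have hoffDiag := congrArg (Nat.cast (R := ℝ)) (h.card_offDiag_eq_sum_range hr)
    rw [Finset.offDiag_card, Nat.cast_sub (Nat.le_mul_self _)] at hoffDiag
    push_cast at hoffDiag
    rw [sq, hoffDiag]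
  rw [hpairs]
  exact sum_range_two_mul_mul_le (fun k ↦ Nat.cast_nonneg _)
    (fun k ↦ mod_cast Finset.card_filter_le _ _) (by positivity) (by positivity) hrich r m

-- The thresholds `47` and `1151` bound the last two terms of `card_sq_sub_card_le` by `#S ^ 2 / 4`
-- each.
theorem card_line_mul_sub_le (h : IsLinearSpace S 𝓛 B) (hL₀ : L₀ ∈ 𝓛)
    (hmax : ∀ L ∈ 𝓛, #(B L) ≤ #(B L₀))
    (hrich : ∀ k : ℕ, (#{L ∈ 𝓛 | k < #(B L)} : ℝ) * k ^ 3 ≤ 6 * #S * k ^ 2 + 72 * #S ^ 2) :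
    (#(B L₀) : ℝ) * (#S - #(B L₀)) ≤ 1152 ^ 2 * #𝓛 := by
  classical
  have hsdiff : (#(S \ B L₀) : ℝ) = #S - #(B L₀) := Finset.cast_card_sdiff (h.subset L₀ hL₀)
  rcases le_or_gt #(S \ B L₀) (47 * #(B L₀)) with hdense | hsparse
  · have hbound : (#(B L₀) : ℝ) * #(S \ B L₀) ≤ (4 * 47 + 2) * #𝓛 :=
      mod_cast h.card_line_mul_card_sdiff_le hL₀ hdense
    rw [← hsdiff]
    refine hbound.trans ?_
    gcongr
    norm_num
  · have hsparse' : 47 * (#(B L₀) : ℝ) < #S - #(B L₀) := hsdiff ▸ mod_cast hsparse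
    rcases Nat.eq_zero_or_pos #(B L₀) with hzero | hpos
    · rw [hzero]
      simp only [Nat.cast_zero, zero_mul]
      positivity
    have hpos' : (1 : ℝ) ≤ #(B L₀) := mod_cast hpos
    have hpairs := h.card_sq_sub_card_le hmax hrich 1151
    norm_num at hpairs
    have hquarter : (#S : ℝ) ^ 2 / 4 ≤ 1152 ^ 2 * #𝓛 := by nlinarith
    linarith [sq_nonneg ((#S : ℝ) - 2 * #(B L₀))]

end IsLinearSpace

/-! ### Lines spanned by a finite set -/

section SpannedLines

variable (k : Type*) {V P : Type*} [DivisionRing k] [AddCommGroup V] [Module k V] [AddTorsor V P]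

open scoped Classical in
/-- The lines passing through at least two points of `S`. -/
def spannedLines (S : Finset P) : Finset (AffineSubspace k P) :=
  S.offDiag.image fun p ↦ line[k, p.1, p.2]

variable {k}

open scoped Classical in
/-- The points of `S` that lie on `L`. -/
def pointsOn (S : Finset P) (L : AffineSubspace k P) : Finset P := {p ∈ S | p ∈ L}

variable {S : Finset P} {L : AffineSubspace k P}

theorem mem_pointsOn {p : P} : p ∈ pointsOn S L ↔ p ∈ S ∧ p ∈ L := by
  simp only [pointsOn, Finset.mem_filter]

theorem mem_spannedLines :
    L ∈ spannedLines k S ↔ ∃ p ∈ S, ∃ q ∈ S, p ≠ q ∧ line[k, p, q] = L := by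
  simp only [spannedLines, Finset.mem_image, Finset.mem_offDiag, Prod.exists]
  tauto

theorem eq_affineSpan_pair_of_mem_spannedLines (hL : L ∈ spannedLines k S) {p q : P} (hpq : p ≠ q)
    (hp : p ∈ L) (hq : q ∈ L) : L = line[k, p, q] := by
  obtain ⟨u, -, v, -, -, rfl⟩ := mem_spannedLines.1 hL
  exact (affineSpan_pair_eq_of_mem_of_mem_of_ne hp hq hpq).symm

variable (k S) in
theorem isLinearSpace_spannedLines :
    IsLinearSpace S (spannedLines k S) (pointsOn S) where
  subset L _ _ hp := (mem_pointsOn.1 hp).1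
  exists_mem p hp q hq hpq := ⟨line[k, p, q], mem_spannedLines.2 ⟨p, hp, q, hq, hpq, rfl⟩,
    mem_pointsOn.2 ⟨hp, left_mem_affineSpan_pair k p q⟩,
    mem_pointsOn.2 ⟨hq, right_mem_affineSpan_pair k p q⟩⟩
  eq_of_mem L hL M hM p q hpq hpL hqL hpM hqM := by
    rw [eq_affineSpan_pair_of_mem_spannedLines hL hpq (mem_pointsOn.1 hpL).2 (mem_pointsOn.1 hqL).2,
      eq_affineSpan_pair_of_mem_spannedLines hM hpq (mem_pointsOn.1 hpM).2 (mem_pointsOn.1 hqM).2]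

end SpannedLines

section Shear

variable {K : Type*} [Field K]

theorem exists_injOn_fst_add_mul_snd [Infinite K] (S : Finset (K × K)) :
    ∃ s : K, Set.InjOn (fun p : K × K ↦ p.1 + s * p.2) S := by
  classical
  obtain ⟨s, hs⟩ := Infinite.exists_notMem_finset
    (S.offDiag.image fun w ↦ (w.1.1 - w.2.1) / (w.2.2 - w.1.2))
  refine ⟨s, fun p hp q hq hpq ↦ not_not.1 fun hne ↦ ?_⟩
  have hdiff : p.1 - q.1 = s * (q.2 - p.2) := by linear_combination hpq
  have hsnd : q.2 - p.2 ≠ 0 := by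
    intro hzero
    rw [hzero, mul_zero] at hdiff
    exact hne (Prod.ext (sub_eq_zero.1 hdiff) (sub_eq_zero.1 hzero).symm)
  exact hs (Finset.mem_image.2
    ⟨(p, q), Finset.mem_offDiag.2 ⟨hp, hq, hne⟩, (div_eq_iff hsnd).2 hdiff⟩)

theorem exists_obliqueLine_mem_affineSpan_pair_iff {s : K} {u v : K × K}
    (huv : u.1 + s * u.2 ≠ v.1 + s * v.2) :
    ∃ ℓ : ObliqueLine K, ∀ p : K × K, p ∈ line[K, u, v] ↔ ℓ.eval (p.1 + s * p.2) = p.2 := by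
  obtain ⟨ℓ, hu, hv⟩ := ObliqueLine.exists_eval_eq_eval_eq huv u.2 v.2
  refine ⟨ℓ, fun p ↦ ?_⟩
  rw [mem_affineSpan_pair_iff_exists_lineMap_eq]
  simp only [ObliqueLine.eval, AffineMap.lineMap_apply_module] at hu hv ⊢
  constructor
  · rintro ⟨t, rfl⟩
    simp only [Prod.fst_add, Prod.snd_add, Prod.smul_fst, Prod.smul_snd, smul_eq_mul]
    linear_combination (1 - t) * hu + t * hv
  · intro hp
    have hsub : v.1 + s * v.2 - (u.1 + s * u.2) ≠ 0 := sub_ne_zero.2 huv.symm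
    obtain ⟨t, ht⟩ : ∃ t, t * (v.1 + s * v.2 - (u.1 + s * u.2)) = p.1 + s * p.2 - (u.1 + s * u.2) :=
      ⟨_, div_mul_cancel₀ _ hsub⟩
    have hsnd : (1 - t) * u.2 + t * v.2 = p.2 := by
      linear_combination hp - (1 - t) * hu - t * hv + ℓ.slope * ht
    have hfst : (1 - t) * u.1 + t * v.1 = p.1 := by linear_combination ht - s * hsnd
    exact ⟨t, Prod.ext hfst hsnd⟩

theorem exists_obliqueLine_mem_iff_of_injOn {s : K} {S : Finset (K × K)}
    (hs : Set.InjOn (fun p : K × K ↦ p.1 + s * p.2) S) :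
    ∀ L ∈ spannedLines K S, ∃ ℓ : ObliqueLine K, ∀ p, p ∈ L ↔ ℓ.eval (p.1 + s * p.2) = p.2 := by
  intro L hL
  obtain ⟨u, hu, v, hv, huv, rfl⟩ := mem_spannedLines.1 hL
  exact exists_obliqueLine_mem_affineSpan_pair_iff (hs.ne hu hv huv)

end Shear

/-! ### The plane over an ordered field -/

section Beck

variable {K : Type*} [Field K] [LinearOrder K] [IsStrictOrderedRing K] {S : Finset (K × K)}

theorem szemeredi_trotter_spannedLines (S : Finset (K × K)) (k : ℕ) :
    (#{L ∈ spannedLines K S | k < #(pointsOn S L)} : ℝ) * k ^ 3 ≤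
      6 * #S * k ^ 2 + 72 * #S ^ 2 := by
  classical
  obtain ⟨s, hs⟩ := exists_injOn_fst_add_mul_snd S
  let shear (p : K × K) : K := p.1 + s * p.2
  obtain ⟨h, hh⟩ : ∃ h : K → K, ∀ p ∈ S, h (shear p) = p.2 :=
    ⟨fun x ↦ (Function.invFunOn shear S x).2, fun p hp ↦
      congrArg Prod.snd (hs.leftInvOn_invFunOn hp)⟩
  have : Nonempty (ObliqueLine K) := ⟨⟨0, 0⟩⟩
  choose! ℓ hℓ using exists_obliqueLine_mem_iff_of_injOn hs
  have hinj : Set.InjOn ℓ (spannedLines K S) := fun L hL M hM hLM ↦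
    AffineSubspace.ext fun p ↦ by rw [hℓ L hL, hℓ M hM, hLM]
  have hpoints (L : AffineSubspace K (K × K)) (hL : L ∈ spannedLines K S) :
      (pointsOn S L).image shear ⊆ graphPoints h (S.image shear) (ℓ L) := by
    refine Finset.image_subset_iff.2 fun p hp ↦ ?_
    obtain ⟨hpS, hpL⟩ := mem_pointsOn.1 hp
    exact Finset.mem_filter.2 ⟨Finset.mem_image_of_mem _ hpS,
      ((hℓ L hL p).1 hpL).trans (hh p hpS).symm⟩
  rw [← Finset.card_image_of_injOn (hinj.mono (Finset.coe_subset.2 (Finset.filter_subset _ _))),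
    ← Finset.card_image_of_injOn hs]
  refine szemeredi_trotter_graph (h := h) (Finset.forall_mem_image.2 fun L hL ↦ ?_)
  obtain ⟨hL, hk⟩ := Finset.mem_filter.1 hL
  rw [← Finset.card_image_of_injOn (hs.mono fun p hp ↦ (mem_pointsOn.1 hp).1)] at hk
  exact hk.trans_le (Finset.card_le_card (hpoints L hL))

theorem beck_induced_lines_general {L₀ : AffineSubspace K (K × K)} (hL₀ : L₀ ∈ spannedLines K S)
    (hmax : ∀ L ∈ spannedLines K S, #(pointsOn S L) ≤ #(pointsOn S L₀)) :
    (#(pointsOn S L₀) : ℝ) * (#S - #(pointsOn S L₀)) ≤ 1152 ^ 2 * #(spannedLines K S) :=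
  (isLinearSpace_spannedLines K S).card_line_mul_sub_le hL₀ hmax (szemeredi_trotter_spannedLines S)

end Beck

theorem richness_coe (S : Finset (ℝ × ℝ)) (L : AffineSubspace ℝ (ℝ × ℝ)) :
    richness S L = #(pointsOn S L) := by
  rw [richness, ← Set.ncard_coe_finset]
  congr 1
  ext p
  exact mem_pointsOn.symm

theorem inducedLines_eq_image_spannedLines (S : Finset (ℝ × ℝ)) :
    InducedLines S = (↑) '' (spannedLines ℝ S : Set (AffineSubspace ℝ (ℝ × ℝ))) := by
  ext L
  constructor
  · rintro ⟨⟨u, v, -, rfl⟩, p, hp, q, hq, hpq, hpL, hqL⟩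
    exact ⟨line[ℝ, p, q], mem_spannedLines.2 ⟨p, hp, q, hq, hpq, rfl⟩,
      congrArg _ (affineSpan_pair_eq_of_mem_of_mem_of_ne hpL hqL hpq)⟩
  · rintro ⟨L, hL, rfl⟩
    obtain ⟨p, hp, q, hq, hpq, rfl⟩ := mem_spannedLines.1 hL
    exact ⟨⟨p, q, hpq, rfl⟩, p, hp, q, hq, hpq, left_mem_affineSpan_pair ℝ p q,
      right_mem_affineSpan_pair ℝ p q⟩

theorem ncard_inducedLines (S : Finset (ℝ × ℝ)) : (InducedLines S).ncard = #(spannedLines ℝ S) := by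
  rw [inducedLines_eq_image_spannedLines, Set.ncard_image_of_injective _ SetLike.coe_injective,
    Set.ncard_coe_finset]

/-- Beck's Induced Lines Theorem: if `r` is the maximum richness of a line
induced by an `n`-point set `S`, then `S` induces at least `C · r · (n − r)` lines. -/
theorem beck_induced_lines :
    ∃ C : ℝ, 0 < C ∧ ∀ (S : Finset (ℝ × ℝ)) (n r : ℕ),
      S.card = n →
      (∃ L ∈ InducedLines S, richness S L = r) →
      (∀ L ∈ InducedLines S, richness S L ≤ r) →
      C * (r : ℝ) * ((n : ℝ) - (r : ℝ)) ≤ ((InducedLines S).ncard : ℝ) := by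
  refine ⟨(1152 ^ 2)⁻¹, by positivity, ?_⟩
  rintro S n r rfl ⟨L₀, hL₀, rfl⟩ hmax
  rw [inducedLines_eq_image_spannedLines] at hL₀
  obtain ⟨L₀, hL₀, rfl⟩ := hL₀
  simp only [inducedLines_eq_image_spannedLines, Set.forall_mem_image, richness_coe] at hmax
  rw [richness_coe, ncard_inducedLines, mul_assoc, inv_mul_le_iff₀ (by positivity)]
  exact beck_induced_lines_general hL₀ fun L hL ↦ hmax hL
end
end
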